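/- arXiv:2009.09605 — 9 statements merged into one kernel-verified Lean document; each statement's English description precedes it below -/
import Mathlib

section
/- For every d-uniform hypergraph G = (V, E) with d ≥ 2 and all integers β, β⁻ with β ≥ β⁻ ≥ 0 and β − β⁻ ≥ d − 1, there exists a subgraph H ⊆ E that is an HEDCS(G, β, β⁻). -/
open Finset

/-- The degree of a vertex `v` in a hypergraph (set of hyperedges) `H`:
the number of hyperedges of `H` containing `v`. -/
def deg {V : Type*} [DecidableEq V] (H : Finset (Finset V)) (v : V) : ℕ :=
  (H.filter (fun e => v ∈ e)).card

theorem deg_insert_aux {V : Type*} [DecidableEq V] (H : Finset (Finset V)) (e : Finset V)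
    (he : e ∉ H) (v : V) :
    (deg (insert e H) v : ℤ) = deg H v + if v ∈ e then 1 else 0 := by
  unfold deg
  rw [Finset.filter_insert]
  split_ifs with h
  · rw [Finset.card_insert_of_notMem (by simp [he])]
    push_cast
    ring
  · simp

theorem sum_deg_aux {V : Type*} [DecidableEq V] (H : Finset (Finset V)) (e : Finset V)
    (he : e ∉ H) :
    ∑ v ∈ e, (deg (insert e H) v : ℤ) = ∑ v ∈ e, (deg H v : ℤ) + e.card := by
  rw [Finset.sum_congr rfl (fun v _ => deg_insert_aux H e he v), Finset.sum_add_distrib]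
  simp

theorem sum_sq_aux {V : Type*} [DecidableEq V] (H : Finset (Finset V)) (e U : Finset V)
    (he : e ∉ H) (hU : e ⊆ U) :
    ∑ v ∈ U, (deg (insert e H) v : ℤ) ^ 2
      = ∑ v ∈ U, (deg H v : ℤ) ^ 2 + 2 * ∑ v ∈ e, (deg H v : ℤ) + e.card := by
  have h1 : ∀ v ∈ U, (deg (insert e H) v : ℤ) ^ 2
      = (deg H v : ℤ) ^ 2 + if v ∈ e then 2 * (deg H v : ℤ) + 1 else 0 := by
    intro v _
    rw [deg_insert_aux H e he v]
    split_ifs <;> ring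
  rw [Finset.sum_congr rfl h1, Finset.sum_add_distrib, ← Finset.sum_filter,
    Finset.filter_mem_eq_inter, Finset.inter_eq_right.mpr hU, Finset.sum_add_distrib,
    ← Finset.mul_sum]
  simp
  ring

/-- For every `d`-uniform hypergraph `G = (V, E)` with `d ≥ 2` and integers
`β ≥ β⁻ ≥ 0` with `β − β⁻ ≥ d − 1`, there exists a subgraph `H ⊆ E` that is an
`HEDCS(G, β, β⁻)`: every edge in `H` has degree-sum at most `β`, every edge of
`E \ H` has degree-sum at least `β⁻`. -/
theorem hedcs_exists {V : Type*} [DecidableEq V] (d : ℕ) (hd : 2 ≤ d)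
    (E : Finset (Finset V)) (hE : ∀ e ∈ E, e.card = d)
    (β βm : ℤ) (hβm : 0 ≤ βm) (hββ : βm ≤ β) (hgap : (d : ℤ) - 1 ≤ β - βm) :
    ∃ H ⊆ E,
      (∀ e ∈ H, (∑ v ∈ e, (deg H v : ℤ)) ≤ β) ∧
      (∀ e ∈ E, e ∉ H → βm ≤ ∑ v ∈ e, (deg H v : ℤ)) := by
  have hU : ∀ e ∈ E, e ⊆ E.biUnion id := fun e he => Finset.subset_biUnion_of_mem id he
  generalize E.biUnion id = U at hU
  obtain ⟨H, hH, hmax⟩ := Finset.exists_max_image E.powerset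
    (fun H => (2 * βm + d - 1) * (H.card : ℤ) - ∑ v ∈ U, (deg H v : ℤ) ^ 2)
    ⟨∅, Finset.empty_mem_powerset E⟩
  rw [Finset.mem_powerset] at hH
  refine ⟨H, hH, ?_, ?_⟩
  · intro e he
    have hn : e ∉ H.erase e := Finset.notMem_erase e H
    have h0 := hmax (H.erase e)
      (Finset.mem_powerset.mpr ((Finset.erase_subset e H).trans hH))
    have h1 := sum_sq_aux (H.erase e) e U hn (hU e (hH he))
    have h2 := sum_deg_aux (H.erase e) e hn
    have h3 := Finset.card_insert_of_notMem hn
    rw [Finset.insert_erase he] at h1 h2 h3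
    rw [hE e (hH he)] at h1 h2
    simp only [h1, h3] at h0
    push_cast at h0
    rw [mul_add] at h0
    by_contra! hc
    linarith
  · intro e heE he
    have h0 := hmax (insert e H)
      (Finset.mem_powerset.mpr (Finset.insert_subset heE hH))
    have h1 := sum_sq_aux H e U he (hU e heE)
    have h3 := Finset.card_insert_of_notMem he
    rw [hE e heE] at h1
    simp only [h1, h3] at h0
    push_cast at h0
    rw [mul_add] at h0
    by_contra! hc
    have hc' : ∑ v ∈ e, (deg H v : ℤ) + 1 ≤ βm := hc
    linarith
end

section
/- Let G = (V, E) be a d-uniform hypergraph with d ≥ 2, let β be a positive integer, and for a subgraph H ⊆ E define the potential Φ(H) = ((2β − (d−1))/d) · Σ_{v∈V} d_H(v) − Σ_{e∈H} Σ_{u∈e} d_H(u). If e ∈ H satisfies Σ_{v∈e} d_H(v) ≥ β + 1, then Φ(H \ {e}) ≥ Φ(H) + 1. -/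
open Finset

theorem deg_erase_aux {V : Type*} [DecidableEq V] (H : Finset (Finset V)) (e : Finset V)
    (he : e ∈ H) (v : V) :
    (deg H v : ℝ) = (deg (H.erase e) v : ℝ) + if v ∈ e then 1 else 0 := by
  unfold deg
  rw [Finset.filter_erase]
  split_ifs with h
  · have hm : e ∈ H.filter (fun e => v ∈ e) := by simp [he, h]
    rw [← Finset.card_erase_add_one hm]
    push_cast
    rfl
  · rw [Finset.erase_eq_of_notMem (by simp [h])]
    simp

theorem sum_swap_aux {V : Type*} [Fintype V] [DecidableEq V] (H : Finset (Finset V)) (f : V → ℝ) :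
    ∑ e ∈ H, ∑ u ∈ e, f u = ∑ v : V, (deg H v : ℝ) * f v := by
  have h1 : ∀ e ∈ H, ∑ u ∈ e, f u = ∑ v : V, if v ∈ e then f v else 0 := by
    intro e _
    simp
  rw [Finset.sum_congr rfl h1, Finset.sum_comm]
  refine Finset.sum_congr rfl fun v _ => ?_
  rw [← Finset.sum_filter, Finset.sum_const, nsmul_eq_mul]
  rfl

/-- If an edge `e ∈ H` violates property (P1), i.e. `∑_{v∈e} d_H(v) ≥ β + 1`,
then removing `e` increases the potential
`Φ(H) = ((2β − (d−1))/d)·∑_v d_H(v) − ∑_{e∈H} ∑_{u∈e} d_H(u)` by at least 1. -/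
theorem potential_increase_remove {V : Type*} [Fintype V] [DecidableEq V]
    (d : ℕ) (hd : 2 ≤ d)
    (E : Finset (Finset V)) (hE : ∀ e ∈ E, e.card = d)
    (β : ℕ) (hβ : 0 < β)
    (Φ : Finset (Finset V) → ℝ)
    (hΦ : ∀ H : Finset (Finset V),
      Φ H = ((2 * (β : ℝ) - ((d : ℝ) - 1)) / d) * (∑ v : V, (deg H v : ℝ))
            - ∑ e ∈ H, ∑ u ∈ e, (deg H u : ℝ))
    (H : Finset (Finset V)) (hH : H ⊆ E)
    (e : Finset V) (he : e ∈ H)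
    (hbig : (β : ℝ) + 1 ≤ ∑ v ∈ e, (deg H v : ℝ)) :
    Φ H + 1 ≤ Φ (H.erase e) := by
  have hcard : (e.card : ℝ) = d := by exact_mod_cast hE e (hH he)
  have hd0 : (d : ℝ) ≠ 0 := by
    have : d ≠ 0 := by omega
    exact_mod_cast this
  have hind : ∑ v : V, (if v ∈ e then (1 : ℝ) else 0) = d := by
    rw [← hcard]
    simp
  have hA : ∑ v : V, (deg H v : ℝ) = ∑ v : V, (deg (H.erase e) v : ℝ) + d := by
    rw [← hind, ← Finset.sum_add_distrib]
    exact Finset.sum_congr rfl fun v _ => deg_erase_aux H e he v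
  have hS : ∑ v ∈ e, (deg H v : ℝ) = ∑ v : V, if v ∈ e then (deg H v : ℝ) else 0 := by
    simp
  have hB : ∑ v : V, (deg H v : ℝ) * (deg H v : ℝ)
      = ∑ v : V, (deg (H.erase e) v : ℝ) * (deg (H.erase e) v : ℝ)
        + (2 * ∑ v ∈ e, (deg H v : ℝ) - d) := by
    rw [hS, ← hind, Finset.mul_sum, ← Finset.sum_sub_distrib, ← Finset.sum_add_distrib]
    refine Finset.sum_congr rfl fun v _ => ?_
    rw [deg_erase_aux H e he v]
    split_ifs <;> ring
  rw [hΦ, hΦ, sum_swap_aux, sum_swap_aux, hA, hB, mul_add, div_mul_cancel₀ _ hd0]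
  linarith
end

section
/- Let G = (V, E) be a d-uniform hypergraph with d ≥ 2, let β, β⁻ be integers with β − β⁻ ≥ d − 1, and for a subgraph H ⊆ E define the potential Φ(H) = ((2β − (d−1))/d) · Σ_{v∈V} d_H(v) − Σ_{e∈H} Σ_{u∈e} d_H(u). If e ∈ E \ H satisfies Σ_{v∈e} d_H(v) ≤ β⁻ − 1, then Φ(H ∪ {e}) ≥ Φ(H) + 1. -/
open Finset

/-- If an edge `e ∈ E \ H` violates property (P2), i.e. `∑_{v∈e} d_H(v) ≤ β⁻ − 1`,
then adding `e` increases the potential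
`Φ(H) = ((2β − (d−1))/d)·∑_v d_H(v) − ∑_{e∈H} ∑_{u∈e} d_H(u)` by at least 1,
provided `β − β⁻ ≥ d − 1`. -/
theorem potential_increase_add {V : Type*} [Fintype V] [DecidableEq V]
    (d : ℕ) (hd : 2 ≤ d)
    (E : Finset (Finset V)) (hE : ∀ e ∈ E, e.card = d)
    (β βm : ℤ) (hgap : (d : ℤ) - 1 ≤ β - βm)
    (Φ : Finset (Finset V) → ℝ)
    (hΦ : ∀ H : Finset (Finset V),
      Φ H = ((2 * (β : ℝ) - ((d : ℝ) - 1)) / d) * (∑ v : V, (deg H v : ℝ))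
            - ∑ e ∈ H, ∑ u ∈ e, (deg H u : ℝ))
    (H : Finset (Finset V)) (hH : H ⊆ E)
    (e : Finset V) (heE : e ∈ E) (heH : e ∉ H)
    (hsmall : ∑ v ∈ e, (deg H v : ℝ) ≤ (βm : ℝ) - 1) :
    Φ H + 1 ≤ Φ (insert e H) := by
  have hdeg : ∀ v : V, (deg (insert e H) v : ℝ) = (deg H v : ℝ) + (if v ∈ e then 1 else 0) := by
    intro v
    unfold deg
    rw [Finset.filter_insert]
    split_ifs with h
    · rw [Finset.card_insert_of_notMem (by simp [heH])]
      push_cast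
      rfl
    · simp
  have hcard : (∑ v ∈ e, (if v ∈ e then (1 : ℝ) else 0)) = d := by
    rw [Finset.sum_congr rfl (fun v hv => if_pos hv)]
    simp [hE e heE]
  have hcard2 : (∑ v : V, (if v ∈ e then (1 : ℝ) else 0)) = d := by
    simp [hE e heE]
  -- double counting of the intersections of `e` with the edges of `H`
  have hcross : (∑ f ∈ H, ∑ v ∈ f, (if v ∈ e then (1 : ℝ) else 0))
      = ∑ v ∈ e, (deg H v : ℝ) := by
    have h1 : ∀ f ∈ H, (∑ v ∈ f, (if v ∈ e then (1 : ℝ) else 0))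
        = ∑ v ∈ e, (if v ∈ f then (1 : ℝ) else 0) := by
      intro f _
      simp [Finset.sum_ite_mem, Finset.inter_comm]
    rw [Finset.sum_congr rfl h1, Finset.sum_comm]
    refine Finset.sum_congr rfl fun v _ => ?_
    simp [deg]
  have hd0 : (d : ℝ) ≠ 0 := by
    have : d ≠ 0 := by omega
    exact_mod_cast this
  have hg : (d : ℝ) - 1 ≤ (β : ℝ) - βm := by exact_mod_cast hgap
  rw [hΦ, hΦ, Finset.sum_insert heH]
  simp only [hdeg, Finset.sum_add_distrib]
  rw [hcard, hcard2, hcross, mul_add, div_mul_cancel₀ _ hd0]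
  linarith
end

section
/- Let d ≥ 2 be an integer, β > 0 a real number, and define φ(x) = min{1, (d−1)x / (d(β − x))} for real 0 ≤ x < β. If a_1, …, a_d are real numbers with 0 ≤ a_i < β for each i, and a_1 + ⋯ + a_d ≥ β(1 − λ) for some real λ ≥ 0, then Σ_{i=1}^d φ(a_i) ≥ 1 − 5λ. -/
open Finset

/-- Lemma: for `φ(x) = min{1, (d−1)x/(d(β−x))}`, if `0 ≤ aᵢ < β` and
`a₁ + ⋯ + a_d ≥ β(1 − λ)` with `λ ≥ 0`, then `∑ φ(aᵢ) ≥ 1 − 5λ`. -/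
theorem phi_sum_lower_bound (d : ℕ) (hd : 2 ≤ d) (β : ℝ) (hβ : 0 < β)
    (φ : ℝ → ℝ) (hφ : ∀ x, φ x = min 1 (((d : ℝ) - 1) * x / (d * (β - x))))
    (a : Fin d → ℝ) (ha : ∀ i, 0 ≤ a i ∧ a i < β)
    (lam : ℝ) (hlam : 0 ≤ lam) (hsum : β * (1 - lam) ≤ ∑ i, a i) :
    1 - 5 * lam ≤ ∑ i, φ (a i) := by
  have hd' : (2 : ℝ) ≤ d := by exact_mod_cast hd
  have hd0 : (0 : ℝ) < d := by linarith
  have hd1 : (0 : ℝ) < (d : ℝ) - 1 := by linarith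
  have hnn : ∀ i, 0 ≤ φ (a i) := by
    intro i
    rw [hφ]
    have h1 := (ha i).1
    have h2 : 0 < β - a i := by linarith [(ha i).2]
    exact le_min zero_le_one (by positivity)
  by_cases h : ∃ i, φ (a i) = 1
  · obtain ⟨i, hi⟩ := h
    have := Finset.single_le_sum (f := fun i => φ (a i)) (fun j _ => hnn j) (Finset.mem_univ i)
    simp only [hi] at this
    linarith
  · push Not at h
    have key : ∀ i, 1 / (d : ℝ) + (d * a i - β) / (((d : ℝ) - 1) * β) ≤ φ (a i) := by
      intro i
      have h2 : 0 < β - a i := by linarith [(ha i).2]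
      have h3 : φ (a i) = ((d : ℝ) - 1) * a i / (d * (β - a i)) := by
        rcases min_choice 1 (((d : ℝ) - 1) * a i / (d * (β - a i))) with h4 | h4
        · exact absurd ((hφ _).trans h4) (h i)
        · exact (hφ _).trans h4
      rw [h3, ← sub_nonneg]
      have h5 : ((d : ℝ) - 1) * a i / (d * (β - a i)) -
          (1 / (d : ℝ) + (d * a i - β) / (((d : ℝ) - 1) * β)) =
          (d * a i - β) ^ 2 / (d * ((d : ℝ) - 1) * β * (β - a i)) := by
        field_simp
        ring
      rw [h5]
      positivity
    have hs := Finset.sum_le_sum (fun i (_ : i ∈ Finset.univ) => key i)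
    have he : ∑ i, (1 / (d : ℝ) + (d * a i - β) / (((d : ℝ) - 1) * β)) =
        1 + d * (∑ i, a i - β) / (((d : ℝ) - 1) * β) := by
      rw [Finset.sum_add_distrib, ← Finset.sum_div, ← Finset.sum_div, Finset.sum_sub_distrib, ← Finset.mul_sum]
      simp only [Finset.sum_const, Finset.card_univ, Fintype.card_fin, nsmul_eq_mul, mul_one]
      rw [div_self hd0.ne', mul_sub]
    have hf : -(5 * lam) ≤ d * (∑ i, a i - β) / (((d : ℝ) - 1) * β) := by
      rw [le_div_iff₀ (by positivity)]
      have h6 : d * (-(β * lam)) ≤ d * (∑ i, a i - β) :=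
        mul_le_mul_of_nonneg_left (by linarith) hd0.le
      have h7 : 0 ≤ (β * lam) * (4 * (d : ℝ) - 5) :=
        mul_nonneg (by positivity) (by linarith)
      linarith
    linarith
end

section
/- Let G = (V, E) be a d-uniform hypergraph with d ≥ 2 and let 0 < ε < 1. Set λ = ε/6 and let β be a real number with β ≥ (8d²/(d−1))·λ^{−3}. Then every HEDCS(G, β, β(1−λ)) H contains an ε-restricted fractional matching (a fractional matching supported on the edges of H in which every edge has value either 1 or at most ε) whose total value is at least μ(G)·(d/(d² − d + 1) − ε/(d−1)). -/
open Finset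

/-- `matchNum E` is `μ(G)`, the maximum cardinality of a matching in the
hypergraph with edge set `E`. -/
def matchNum {V : Type*} [DecidableEq V] (E : Finset (Finset V)) : ℕ :=
  (E.powerset.filter (fun M => ∀ e ∈ M, ∀ f ∈ M, e ≠ f → e ∩ f = ∅)).sup Finset.card



lemma dcount {V : Type*} [DecidableEq V] (G : Finset (Finset V)) (U : Finset V)
    (hGU : ∀ f ∈ G, f ⊆ U) (x : V → ℝ) (w : Finset V → ℝ) :
    ∑ v ∈ U, x v * ∑ f ∈ G.filter (fun f => v ∈ f), w f = ∑ f ∈ G, w f * ∑ v ∈ f, x v := by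
  simp_rw [Finset.mul_sum]
  rw [Finset.sum_comm' (t' := G) (s' := fun f => f)]
  · refine Finset.sum_congr rfl fun f _ => Finset.sum_congr rfl fun v _ => by ring
  · intro v f
    simp only [Finset.mem_filter]
    constructor
    · rintro ⟨_, h2, h3⟩; exact ⟨h3, h2⟩
    · rintro ⟨h1, h2⟩; exact ⟨hGU f h2 h1, h2, h1⟩

lemma dcount_card {V : Type*} [DecidableEq V] (G : Finset (Finset V)) (U : Finset V)
    (hGU : ∀ f ∈ G, f ⊆ U) (x : V → ℝ) :
    ∑ v ∈ U, x v * (deg G v : ℝ) = ∑ f ∈ G, ∑ v ∈ f, x v := by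
  have := dcount G U hGU x (fun _ => 1)
  simpa [deg] using this

lemma lp_duality {V : Type*} [DecidableEq V] (F : Finset (Finset V)) (U : Finset V)
    (hFU : ∀ f ∈ F, f ⊆ U) (cap : V → ℝ) (hcap : ∀ v, 0 ≤ cap v) (δ : ℝ) (hδ : 0 ≤ δ) (τ : ℝ) :
    (∃ y : Finset V → ℝ, (∀ f, 0 ≤ y f ∧ y f ≤ δ) ∧
      (∀ v ∈ U, ∑ f ∈ F.filter (fun f => v ∈ f), y f ≤ cap v) ∧ τ ≤ ∑ f ∈ F, y f) ∨
    (∃ c : V → ℝ, (∀ v, 0 ≤ c v ∧ c v ≤ 1) ∧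
      ∑ v ∈ U, cap v * c v + δ * ∑ f ∈ F, max 0 (1 - ∑ v ∈ f, c v) < τ) := by
  by_contra hcon
  push Not at hcon
  obtain ⟨h1, h2⟩ := hcon
  let L : (Finset V → ℝ) →L[ℝ] ℝ × (U → ℝ) :=
    ContinuousLinearMap.prod (∑ f ∈ F, ContinuousLinearMap.proj f)
      (ContinuousLinearMap.pi fun v : U => ∑ f ∈ F.filter (fun f => v.1 ∈ f), ContinuousLinearMap.proj f)
  let K : Set (Finset V → ℝ) := Set.pi Set.univ (fun _ => Set.Icc 0 δ)
  let T : Set (ℝ × (U → ℝ)) := Set.Ici τ ×ˢ Set.Iic (fun v : U => cap v.1)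
  have hL1 : ∀ y, (L y).1 = ∑ f ∈ F, y f := by intro y; simp [L]
  have hL2 : ∀ y v, (L y).2 v = ∑ f ∈ F.filter (fun f => v.1 ∈ f), y f := by
    intro y v; simp [L]
  have hKc : IsCompact K := isCompact_univ_pi fun _ => isCompact_Icc
  have hKx : Convex ℝ K := convex_pi fun _ _ => convex_Icc 0 δ
  have hTc : IsClosed T := isClosed_Ici.prod isClosed_Iic
  have hTx : Convex ℝ T := (convex_Ici τ).prod (convex_Iic _)
  have hdisj : Disjoint (L '' K) T := by
    rw [Set.disjoint_left]
    rintro _ ⟨y, hy, rfl⟩ ⟨ht1, ht2⟩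
    have hy' : ∀ f, 0 ≤ y f ∧ y f ≤ δ := fun f => hy f (Set.mem_univ _)
    have := h1 y hy' (fun v hv => by
      have := ht2 ⟨v, hv⟩
      rwa [hL2] at this)
    rw [← hL1] at this
    exact absurd ht1 (not_le.mpr this)
  obtain ⟨φ, a, b, hφ1, hab, hφ2⟩ := geometric_hahn_banach_compact_closed
    (hKx.linear_image L.toLinearMap) (hKc.image L.continuous) hTx hTc hdisj
  let α : ℝ := φ (1, 0)
  let g : V → ℝ := fun v => if h : v ∈ U then - φ (0, Pi.single ⟨v, h⟩ 1) else 0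
  have hφ : ∀ (t : ℝ) (l : U → ℝ), φ (t, l) = α * t - ∑ v : U, g v.1 * l v := by
    intro t l
    have e1 : (t, l) = t • ((1 : ℝ), (0 : U → ℝ)) + ∑ v : U, l v • ((0 : ℝ), (Pi.single v (1:ℝ) : U → ℝ)) := by
      ext x
      · simp [Prod.fst_sum]
      · simp [Prod.snd_sum, Finset.sum_apply, Pi.single_apply]
    rw [e1, map_add, map_sum, map_smul]
    simp only [map_smul, smul_eq_mul, g, α]
    rw [sub_eq_add_neg, ← Finset.sum_neg_distrib, mul_comm t]
    congr 1
    refine Finset.sum_congr rfl fun v _ => ?_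
    simp; ring
  have hsumU : ∀ (x : V → ℝ), ∑ v : U, x v.1 = ∑ v ∈ U, x v := fun x => Finset.sum_coe_sort U x
  have hT : ∀ t (l : V → ℝ), τ ≤ t → (∀ v ∈ U, l v ≤ cap v) → b < α * t - ∑ v ∈ U, g v * l v := by
    intro t l ht hl
    have := hφ2 (t, fun v : U => l v.1) ⟨ht, fun v => hl v.1 v.2⟩
    rw [hφ, hsumU (fun v => g v * l v)] at this
    exact this
  have hα : 0 ≤ α := by
    by_contra hneg
    push Not at hneg
    have h0 := hT τ cap le_rfl (fun _ _ => le_rfl)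
    have := hT (τ + (α * τ - ∑ v ∈ U, g v * cap v - b) / (-α)) cap
      (by have : 0 ≤ (α * τ - ∑ v ∈ U, g v * cap v - b) / (-α) := div_nonneg (by linarith) (by linarith)
          linarith) (fun _ _ => le_rfl)
    have e : α * ((α * τ - ∑ v ∈ U, g v * cap v - b) / (-α)) = -(α * τ - ∑ v ∈ U, g v * cap v - b) := by
      have : α ≠ 0 := hneg.ne
      rw [div_neg, mul_neg, mul_div_cancel₀ _ this]
    rw [mul_add, e] at this
    linarith
  have hg : ∀ v, 0 ≤ g v := by
    intro v
    by_cases hv : v ∈ U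
    swap
    · simp [g, hv]
    by_contra hneg
    push Not at hneg
    have h0 := hT τ cap le_rfl (fun _ _ => le_rfl)
    set R := α * τ - ∑ v ∈ U, g v * cap v - b with hR
    have hR0 : 0 ≤ R / (-g v) := div_nonneg (by linarith) (by linarith)
    have := hT τ (fun w => cap w - if w = v then R / (-g v) else 0) le_rfl
      (fun w _ => by
        split_ifs
        · linarith
        · linarith)
    simp only [mul_sub, Finset.sum_sub_distrib, mul_ite, mul_zero, Finset.sum_ite_eq', hv, if_true] at this
    have e : g v * (R / (-g v)) = -R := by
      have : g v ≠ 0 := hneg.ne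
      field_simp
    rw [e] at this
    linarith
  have hK : δ * ∑ f ∈ F, max 0 (α - ∑ v ∈ f, g v) < a := by
    let y : Finset V → ℝ := fun f => if ∑ v ∈ f, g v ≤ α then δ else 0
    have hy : y ∈ K := by
      intro f _
      simp only [y]
      split_ifs
      · exact ⟨hδ, le_rfl⟩
      · exact ⟨le_rfl, hδ⟩
    have := hφ1 (L y) ⟨y, hy, rfl⟩
    rw [show L y = ((L y).1, (L y).2) from rfl, hφ, hL1] at this
    simp only [hL2] at this
    rw [hsumU (fun v => g v * ∑ f ∈ F.filter (fun f => v ∈ f), y f), dcount F U hFU,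
      Finset.mul_sum, ← Finset.sum_sub_distrib] at this
    rw [Finset.mul_sum]
    refine lt_of_eq_of_lt (Finset.sum_congr rfl fun f _ => ?_) this
    simp only [y]
    split_ifs with h
    · rw [max_eq_right (by linarith)]; ring
    · rw [max_eq_left (by linarith)]; ring
  have hfin := hT τ cap le_rfl (fun _ _ => le_rfl)
  have hgc : 0 ≤ ∑ v ∈ U, g v * cap v := Finset.sum_nonneg fun v _ => mul_nonneg (hg v) (hcap v)
  have hmx : 0 ≤ δ * ∑ f ∈ F, max 0 (α - ∑ v ∈ f, g v) :=
    mul_nonneg hδ (Finset.sum_nonneg fun _ _ => le_max_left _ _)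
  have hα' : 0 < α := by
    rcases hα.lt_or_eq with h | h
    · exact h
    · rw [← h] at hfin; linarith
  have := h2 (fun v => min (g v / α) 1)
    (fun v => ⟨le_min (div_nonneg (hg v) hα) zero_le_one, min_le_right _ _⟩)
  have b1 : ∑ v ∈ U, cap v * min (g v / α) 1 ≤ (∑ v ∈ U, g v * cap v) / α := by
    rw [Finset.sum_div]
    refine Finset.sum_le_sum fun v _ => ?_
    calc cap v * min (g v / α) 1 ≤ cap v * (g v / α) :=
          mul_le_mul_of_nonneg_left (min_le_left _ _) (hcap v)
      _ = _ := by ring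
  have b2 : ∑ f ∈ F, max 0 (1 - ∑ v ∈ f, min (g v / α) 1) ≤
      (∑ f ∈ F, max 0 (α - ∑ v ∈ f, g v)) / α := by
    rw [Finset.sum_div]
    refine Finset.sum_le_sum fun f _ => ?_
    have hpos : 0 ≤ max 0 (α - ∑ v ∈ f, g v) / α := div_nonneg (le_max_left _ _) hα
    refine max_le hpos ?_
    by_cases hex : ∃ v ∈ f, 1 ≤ g v / α
    · obtain ⟨v, hv, hv1⟩ := hex
      have : min (g v / α) 1 ≤ ∑ v ∈ f, min (g v / α) 1 :=
        Finset.single_le_sum (f := fun v => min (g v / α) 1)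
          (fun w _ => le_min (div_nonneg (hg w) hα) zero_le_one) hv
      rw [min_eq_right hv1] at this
      linarith
    · push Not at hex
      rw [Finset.sum_congr rfl fun v hv => min_eq_left (hex v hv).le, ← Finset.sum_div]
      calc 1 - (∑ v ∈ f, g v) / α = (α - ∑ v ∈ f, g v) / α := by field_simp
        _ ≤ _ := by gcongr; exact le_max_right _ _
  have b3 : δ * ∑ f ∈ F, max 0 (1 - ∑ v ∈ f, min (g v / α) 1) ≤
      (δ * ∑ f ∈ F, max 0 (α - ∑ v ∈ f, g v)) / α := by
    rw [mul_div_assoc]; exact mul_le_mul_of_nonneg_left b2 hδ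
  have b4 : (∑ v ∈ U, g v * cap v) / α + (δ * ∑ f ∈ F, max 0 (α - ∑ v ∈ f, g v)) / α < τ := by
    rw [← add_div, div_lt_iff₀ hα']; linarith
  linarith

lemma core_ge3 {V : Type*} [DecidableEq V] (H F : Finset (Finset V)) (U W : Finset V)
    (hFH : F ⊆ H) (hFU : ∀ f ∈ F, f ⊆ U) (hWU : W ⊆ U) (β : ℝ) (hβ : 0 < β)
    (hP1 : ∀ e ∈ H, (∑ v ∈ e, (deg H v : ℝ)) ≤ β)
    (c : V → ℝ) (hc : ∀ v, 0 ≤ c v ∧ c v ≤ 1) (r : ℝ) (hr : 0 ≤ r) :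
    2 * r * ∑ v ∈ W, (deg F v : ℝ) ≤ (r + 1/2)^2 * β * ∑ v ∈ U, c v + r^2 * β * (W.card : ℝ)
      + ∑ f ∈ F, max 0 (1 - ∑ v ∈ f, c v) := by
  have hle : ∀ v, (deg F v : ℝ) ≤ deg H v := fun v => by
    unfold deg
    exact_mod_cast Finset.card_le_card (Finset.filter_subset_filter _ hFH)
  have hsq : ∑ v ∈ U, (deg F v : ℝ)^2 ≤ F.card * β := by
    calc ∑ v ∈ U, (deg F v : ℝ)^2 ≤ ∑ v ∈ U, (deg H v : ℝ) * deg F v := by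
          refine Finset.sum_le_sum fun v _ => ?_
          rw [sq]; exact mul_le_mul_of_nonneg_right (hle v) (by positivity)
      _ = ∑ f ∈ F, ∑ v ∈ f, (deg H v : ℝ) := dcount_card F U hFU _
      _ ≤ ∑ f ∈ F, β := Finset.sum_le_sum fun f hf => hP1 f (hFH hf)
      _ = _ := by simp
  have hcD : ∑ v ∈ U, c v * (deg F v : ℝ) = ∑ f ∈ F, ∑ v ∈ f, c v := dcount_card F U hFU _
  have hZ : (F.card : ℝ) ≤ ∑ f ∈ F, ∑ v ∈ f, c v + ∑ f ∈ F, max 0 (1 - ∑ v ∈ f, c v) := by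
    rw [← Finset.sum_add_distrib, Finset.card_eq_sum_ones]
    push_cast
    refine Finset.sum_le_sum fun f _ => ?_
    have := le_max_right 0 (1 - ∑ v ∈ f, c v)
    linarith
  have hpt : ∀ v ∈ U, β * (c v * deg F v) + (if v ∈ W then 2 * r * β * deg F v - r^2*β^2 else 0)
      - (r+1/2)^2*β^2 * c v ≤ (deg F v : ℝ)^2 := by
    intro v _
    obtain ⟨h0, h1⟩ := hc v
    have hD : (0:ℝ) ≤ deg F v := by positivity
    generalize (deg F v : ℝ) = D at *
    generalize c v = x at *
    have k1 : 0 ≤ x * (D - (r+1/2)*β)^2 := by positivity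
    have k2 : 0 ≤ (1-x) * (D - r*β)^2 := mul_nonneg (by linarith) (sq_nonneg _)
    have k3 : 0 ≤ (1-x) * D^2 := mul_nonneg (by linarith) (sq_nonneg _)
    have k4 : 0 ≤ x * (r * β * D) := by positivity
    have k5 : 0 ≤ x * (r^2*β^2) := by positivity
    split_ifs
    · nlinarith
    · nlinarith
  have hs := (Finset.sum_le_sum hpt).trans hsq
  rw [Finset.sum_sub_distrib, Finset.sum_add_distrib, ← Finset.mul_sum, ← Finset.mul_sum,
    Finset.sum_ite_mem, Finset.inter_eq_right.mpr hWU, Finset.sum_sub_distrib, ← Finset.mul_sum,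
    hcD] at hs
  simp only [Finset.sum_const, nsmul_eq_mul] at hs
  have h3 := mul_le_mul_of_nonneg_right hZ hβ.le
  refine le_of_mul_le_mul_left ?_ hβ
  nlinarith

lemma round_lemma {α ι : Type*} [DecidableEq α] (A : Finset α) (X : Finset ι) (w : α → ℝ)
    (r : ι → α → ℝ) (κ : ℝ) : ∀ z : ι → ℝ, ∃ ξ : α → ℝ, (∀ a, ξ a = 0 ∨ ξ a = 1) ∧
      - κ * ∑ u ∈ X, ((z u)^2 + 2/9 * ∑ a ∈ A, (r u a)^2) ≤
      ∑ a ∈ A, w a * (ξ a - 1/3) - κ * ∑ u ∈ X, (z u + ∑ a ∈ A, r u a * (ξ a - 1/3))^2 := by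
  induction A using Finset.induction_on with
  | empty => intro z; exact ⟨fun _ => 0, fun _ => Or.inl rfl, by simp⟩
  | insert a A ha ih =>
    intro z
    have key : ∀ e : ℝ, (e = 0 ∨ e = 1) → ∃ ξ : α → ℝ, (∀ a, ξ a = 0 ∨ ξ a = 1) ∧
        w a * (e - 1/3) - κ * ∑ u ∈ X, ((z u + r u a * (e - 1/3))^2 + 2/9 * ∑ a ∈ A, (r u a)^2) ≤
        ∑ a ∈ insert a A, w a * (ξ a - 1/3)
          - κ * ∑ u ∈ X, (z u + ∑ a ∈ insert a A, r u a * (ξ a - 1/3))^2 := by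
      intro e he
      obtain ⟨ξ, h1, h2⟩ := ih (fun u => z u + r u a * (e - 1/3))
      have hne : ∀ b ∈ A, Function.update ξ a e b = ξ b := fun b hb =>
        Function.update_of_ne (by rintro rfl; exact ha hb) _ _
      refine ⟨Function.update ξ a e, ?_, ?_⟩
      · intro b
        by_cases hb : b = a
        · subst hb; simpa using he
        · rw [Function.update_of_ne hb]; exact h1 b
      · have e1 : ∀ x : α → ℝ, ∑ b ∈ insert a A, x b * (Function.update ξ a e b - 1/3)
            = x a * (e - 1/3) + ∑ b ∈ A, x b * (ξ b - 1/3) := by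
          intro x
          rw [Finset.sum_insert ha, Function.update_self]
          congr 1
          exact Finset.sum_congr rfl fun b hb => by rw [hne b hb]
        simp only [e1]
        simp only [← add_assoc]
        linarith
    obtain ⟨ξ0, a0, b0⟩ := key 0 (Or.inl rfl)
    obtain ⟨ξ1, a1, b1⟩ := key 1 (Or.inr rfl)
    have havg : - κ * ∑ u ∈ X, ((z u)^2 + 2/9 * ∑ a ∈ insert a A, (r u a)^2) =
        2/3 * (w a * (0 - 1/3) - κ * ∑ u ∈ X, ((z u + r u a * (0 - 1/3))^2 + 2/9 * ∑ a ∈ A, (r u a)^2))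
        + 1/3 * (w a * (1 - 1/3) - κ * ∑ u ∈ X, ((z u + r u a * (1 - 1/3))^2 + 2/9 * ∑ a ∈ A, (r u a)^2)) := by
      have : ∑ u ∈ X, ((z u)^2 + 2/9 * ∑ a ∈ insert a A, (r u a)^2) =
          2/3 * ∑ u ∈ X, ((z u + r u a * (0 - 1/3))^2 + 2/9 * ∑ a ∈ A, (r u a)^2) +
          1/3 * ∑ u ∈ X, ((z u + r u a * (1 - 1/3))^2 + 2/9 * ∑ a ∈ A, (r u a)^2) := by
        rw [Finset.mul_sum, Finset.mul_sum, ← Finset.sum_add_distrib]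
        refine Finset.sum_congr rfl fun u _ => ?_
        rw [Finset.sum_insert ha]; ring
      rw [this]; ring
    by_cases hcase : - κ * ∑ u ∈ X, ((z u)^2 + 2/9 * ∑ a ∈ insert a A, (r u a)^2) ≤
        (w a * (0 - 1/3) - κ * ∑ u ∈ X, ((z u + r u a * (0 - 1/3))^2 + 2/9 * ∑ a ∈ A, (r u a)^2))
    · exact ⟨ξ0, a0, hcase.trans b0⟩
    · push Not at hcase
      exact ⟨ξ1, a1, le_trans (by linarith) b1⟩

/-- `H` carries an `ε`-restricted fractional matching of value at least `T`. -/
def Good {V : Type*} [DecidableEq V] (H : Finset (Finset V)) (ε T : ℝ) : Prop :=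
  ∃ y : Finset V → ℝ,
      (∀ e, e ∉ H → y e = 0) ∧
      (∀ e, 0 ≤ y e ∧ y e ≤ 1) ∧
      (∀ v : V, ∑ e ∈ H.filter (fun e => v ∈ e), y e ≤ 1) ∧
      (∀ e ∈ H, y e = 1 ∨ y e ≤ ε) ∧
      T ≤ ∑ e ∈ H, y e

lemma sum_ind {V : Type*} [DecidableEq V] (G F : Finset (Finset V)) (hF : F ⊆ G) (p : Finset V → Prop)
    [DecidablePred p] (y : Finset V → ℝ) :
    ∑ e ∈ G.filter p, (if e ∈ F then y e else 0) = ∑ e ∈ F.filter p, y e := by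
  rw [Finset.sum_ite_mem]
  congr 1
  ext e
  simp only [Finset.mem_inter, Finset.mem_filter]
  constructor
  · rintro ⟨⟨_, h⟩, h'⟩; exact ⟨h', h⟩
  · rintro ⟨h, h'⟩; exact ⟨⟨hF h, h'⟩, h⟩

lemma sum_ind' {V : Type*} [DecidableEq V] (G F : Finset (Finset V)) (hF : F ⊆ G) 
    (y : Finset V → ℝ) :
    ∑ e ∈ G, (if e ∈ F then y e else 0) = ∑ e ∈ F, y e := by
  rw [Finset.sum_ite_mem, Finset.inter_eq_right.mpr hF]

lemma good_of {V : Type*} [DecidableEq V] (H S F : Finset (Finset V)) (U : Finset V)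
    (hS : S ⊆ H) (hF : F ⊆ H) (hSd : ∀ e ∈ S, ∀ f ∈ S, e ≠ f → Disjoint e f)
    (hSF : ∀ s ∈ S, ∀ f ∈ F, Disjoint s f) (hne : ∀ f ∈ F, f.Nonempty)
    (hFU : ∀ f ∈ F, f ⊆ U) (ε : ℝ) (hε : ε ≤ 1) (y : Finset V → ℝ)
    (hy : ∀ f, 0 ≤ y f ∧ y f ≤ ε)
    (hl : ∀ v ∈ U, ∑ f ∈ F.filter (fun f => v ∈ f), y f ≤ 1)
    (T : ℝ) (hT : T ≤ S.card + ∑ f ∈ F, y f) : Good H ε T := by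
  have hSnF : ∀ e ∈ S, e ∉ F := fun e h1 h2 => by
    have := hSF e h1 e h2
    rw [disjoint_self] at this
    have h3 := hne e h2
    rw [this] at h3
    simp at h3
  have hε0 : 0 ≤ ε := (hy ∅).1.trans (hy ∅).2
  refine ⟨fun e => (if e ∈ S then 1 else 0) + (if e ∈ F then y e else 0), ?_, ?_, ?_, ?_, ?_⟩
  · intro e he
    beta_reduce
    rw [if_neg (fun h => he (hS h)), if_neg (fun h => he (hF h)), add_zero]
  · intro e
    beta_reduce
    by_cases h1 : e ∈ S
    · rw [if_pos h1, if_neg (hSnF e h1)]; norm_num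
    · rw [if_neg h1]
      split_ifs
      · exact ⟨by linarith [(hy e).1], by linarith [(hy e).2]⟩
      · norm_num
  · intro v
    rw [Finset.sum_add_distrib, sum_ind H S hS, sum_ind H F hF]
    have hc : (S.filter (fun e => v ∈ e)).card ≤ 1 := by
      rw [Finset.card_le_one]
      intro a ha b hb
      simp only [Finset.mem_filter] at ha hb
      by_contra hab
      exact Finset.disjoint_left.mp (hSd a ha.1 b hb.1 hab) ha.2 hb.2
    rw [Finset.sum_const, nsmul_eq_mul, mul_one]
    by_cases hSv : ∃ s ∈ S, v ∈ s
    · obtain ⟨s, hs, hv⟩ := hSv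
      have : F.filter (fun f => v ∈ f) = ∅ := by
        rw [Finset.filter_eq_empty_iff]
        intro f hf hvf
        exact Finset.disjoint_left.mp (hSF s hs f hf) hv hvf
      rw [this, Finset.sum_empty, add_zero]
      exact_mod_cast hc
    · have : S.filter (fun f => v ∈ f) = ∅ := by
        rw [Finset.filter_eq_empty_iff]
        intro f hf hvf
        exact hSv ⟨f, hf, hvf⟩
      rw [this, Finset.card_empty, Nat.cast_zero, zero_add]
      by_cases hv : v ∈ U
      · exact hl v hv
      · have : F.filter (fun f => v ∈ f) = ∅ := by
          rw [Finset.filter_eq_empty_iff]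
          intro f hf hvf
          exact hv (hFU f hf hvf)
        rw [this]; simp
  · intro e _
    beta_reduce
    by_cases h1 : e ∈ S
    · left; rw [if_pos h1, if_neg (hSnF e h1)]; norm_num
    · right; rw [if_neg h1]
      split_ifs
      · linarith [(hy e).2]
      · linarith
  · rw [Finset.sum_add_distrib, sum_ind' H S hS, sum_ind' H F hF]
    simpa using hT

lemma card_X {V : Type*} [DecidableEq V] (d : ℕ) (B : Finset (Finset V)) (hB : ∀ b ∈ B, b.card = d)
    (hBd : ∀ e ∈ B, ∀ f ∈ B, e ≠ f → Disjoint e f) :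
    ((B.biUnion id).card : ℝ) = d * B.card := by
  have h := Finset.card_biUnion (s := B) (t := id) hBd
  simp only [id] at h
  rw [Finset.sum_congr rfl hB] at h
  simp only [id, h]
  simp [mul_comm]

lemma sum_X {V : Type*} [DecidableEq V] (B : Finset (Finset V))
    (hBd : ∀ e ∈ B, ∀ f ∈ B, e ≠ f → Disjoint e f) (x : V → ℝ) (t : ℝ)
    (h : ∀ b ∈ B, t ≤ ∑ v ∈ b, x v) :
    B.card * t ≤ ∑ v ∈ B.biUnion id, x v := by
  have h' : (B : Set (Finset V)).PairwiseDisjoint id := fun a ha b hb hab => hBd a ha b hb hab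
  rw [Finset.sum_biUnion h']
  simp only [id]
  calc (B.card : ℝ) * t = ∑ b ∈ B, t := by simp
    _ ≤ _ := Finset.sum_le_sum h

lemma deg_F {V : Type*} [DecidableEq V] (H : Finset (Finset V)) (X : Finset V) (v : V) (hv : v ∈ X) :
    deg (H.filter (fun f => ¬ Disjoint f X)) v = deg H v := by
  unfold deg
  congr 1
  ext f
  simp only [Finset.mem_filter]
  constructor
  · rintro ⟨⟨a, _⟩, b⟩; exact ⟨a, b⟩
  · rintro ⟨a, b⟩; exact ⟨⟨a, fun h => Finset.disjoint_left.mp h b hv⟩, b⟩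

lemma case_ge4 {V : Type*} [DecidableEq V] (d : ℕ) (hd : 4 ≤ d) (H A B : Finset (Finset V))
    (hH : ∀ e ∈ H, e.card = d) (hB : ∀ b ∈ B, b.card = d)
    (hBd : ∀ e ∈ B, ∀ f ∈ B, e ≠ f → Disjoint e f)
    (ε lam β : ℝ) (h0 : 0 < lam) (h1 : lam < 1/6) (he : ε = 6 * lam)
    (hβ : 0 < β) (hβ4 : 4 / β ≤ ε)
    (hP1 : ∀ e ∈ H, (∑ v ∈ e, (deg H v : ℝ)) ≤ β)
    (hP2 : ∀ b ∈ B, β * (1 - lam) ≤ ∑ v ∈ b, (deg H v : ℝ))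
    (hT : (A.card : ℝ) < (A.card + B.card) * ((d : ℝ) / ((d : ℝ) ^ 2 - d + 1) - ε / ((d : ℝ) - 1))) :
    Good H ε ((A.card + B.card) * ((d : ℝ) / ((d : ℝ) ^ 2 - d + 1) - ε / ((d : ℝ) - 1))) := by
  set X := B.biUnion id with hX
  set F := H.filter (fun f => ¬ Disjoint f X) with hF
  set T := (A.card + B.card) * ((d : ℝ) / ((d : ℝ) ^ 2 - d + 1) - ε / ((d : ℝ) - 1)) with hTd
  have hFH : F ⊆ H := Finset.filter_subset _ _
  have hFU : ∀ f ∈ F, f ⊆ X ∪ H.biUnion id := fun f hf => 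
    (Finset.subset_biUnion_of_mem id (hFH hf)).trans Finset.subset_union_right
  rcases lp_duality F (X ∪ H.biUnion id) hFU (fun _ => 1) (fun _ => zero_le_one) ε (by linarith) T with
    ⟨y, hy, hl, hs⟩ | ⟨c, hc, hs⟩
  · refine good_of H ∅ F _ (by simp) hFH (by simp) (by simp) ?_ hFU ε (by linarith) y hy hl T ?_
    · intro f hf
      rw [← Finset.card_pos, hH f (hFH hf)]; omega
    · simpa using hs
  · exfalso
    have hd4 : (4:ℝ) ≤ d := by exact_mod_cast hd
    have core := core_ge3 H F _ X hFH hFU Finset.subset_union_left β hβ hP1 c hc (1/(d+2)) (by positivity)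
    have hP : (B.card : ℝ) * (β * (1 - lam)) ≤ ∑ v ∈ X, (deg F v : ℝ) := by
      refine (sum_X B hBd _ _ hP2).trans (le_of_eq ?_)
      refine Finset.sum_congr rfl fun v hv => ?_
      rw [hF, deg_F H X v hv]
    rw [card_X d B hB hBd] at core
    simp only [one_mul] at hs
    have hZ : 0 ≤ ∑ f ∈ F, max 0 (1 - ∑ v ∈ f, c v) := Finset.sum_nonneg fun _ _ => le_max_left _ _
    have hg : (0:ℝ) ≤ B.card := by positivity
    have hh : (0:ℝ) ≤ A.card := by positivity
    generalize ∑ f ∈ F, max 0 (1 - ∑ v ∈ f, c v) = Z at *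
    generalize ∑ v ∈ X ∪ H.biUnion id, c v = C at *
    generalize ∑ v ∈ X, (deg F v : ℝ) = P at *
    generalize (B.card : ℝ) = g at *
    generalize (A.card : ℝ) = h at *
    generalize (d : ℝ) = D at *
    clear_value T
    -- scale the core inequality
    have hD2 : 0 < D + 2 := by linarith
    have k1 : 8 * (D+2) * (g * (1 - lam)) ≤ (D+4)^2 * C + 4 * D * g + 4 * (D+2)^2 * (Z / β) := by
      have e1 : 2 * (1/(D+2)) * (g * (β * (1 - lam))) ≤
          (1/(D+2) + 1/2)^2 * β * C + (1/(D+2))^2 * β * (D * g) + Z :=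
        le_trans (mul_le_mul_of_nonneg_left hP (by positivity)) core
      have e2 := mul_le_mul_of_nonneg_left e1 (show 0 ≤ 4 * (D+2)^2 / β by positivity)
      have e3 : 4 * (D+2)^2 / β * (2 * (1/(D+2)) * (g * (β * (1 - lam)))) = 8 * (D+2) * (g * (1 - lam)) := by
        field_simp; ring
      have e4 : 4 * (D+2)^2 / β * ((1/(D+2) + 1/2)^2 * β * C + (1/(D+2))^2 * β * (D * g) + Z) =
          (D+4)^2 * C + 4 * D * g + 4 * (D+2)^2 * (Z / β) := by
        field_simp; ring
      rw [e3, e4] at e2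
      exact e2
    have k2 : 4 * (D+2)^2 * (Z / β) ≤ (D+4)^2 * (ε * Z) := by
      have : 4 * (Z / β) ≤ ε * Z := by
        calc 4 * (Z/β) = 4 / β * Z := by ring
          _ ≤ _ := mul_le_mul_of_nonneg_right hβ4 hZ
      have h2 : 0 ≤ ε * Z := mul_nonneg (by linarith) hZ
      nlinarith
    -- C + εZ ≥ 4 g /(D+4) (1 - 2 lam)
    have k3 : 4 * g * (1 - 2 * lam) ≤ (D+4) * (C + ε * Z) := by
      have : (D+4) * (4 * g * (1 - 2 * lam)) ≤ (D+4) * ((D+4) * (C + ε * Z)) := by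
        nlinarith [mul_nonneg hg h0.le]
      exact le_of_mul_le_mul_left this (by linarith)
    have k4 : D * g * (1 - 2 * lam) ≤ (D-1)^2 * (C + ε * Z) := by
      have hpos : 0 ≤ g * (1 - 2*lam) := mul_nonneg hg (by linarith)
      have : D * (D+4) ≤ 4 * (D-1)^2 := by nlinarith
      have e1 : (D-1)^2 * (4 * g * (1 - 2 * lam)) ≤ (D-1)^2 * ((D+4) * (C + ε * Z)) :=
        mul_le_mul_of_nonneg_left k3 (sq_nonneg _)
      have e2 := mul_le_mul_of_nonneg_right this hpos
      have : (D+4) * (D * g * (1 - 2 * lam)) ≤ (D+4) * ((D-1)^2 * (C + ε * Z)) := by linarith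
      exact le_of_mul_le_mul_left this (by linarith)
    have hq : 0 < D^2 - D + 1 := by nlinarith
    set ρ := D / (D^2 - D + 1) with hρ
    have hρ0 : 0 ≤ ρ := div_nonneg (by linarith) hq.le
    have hρe : ρ * (D^2 - D + 1) = D := div_mul_cancel₀ _ hq.ne'
    have hρ1 : ρ * (D - 1) ≤ 1 := by
      rw [hρ, div_mul_eq_mul_div, div_le_one hq]; nlinarith
    clear_value ρ
    have hD1 : 0 < D - 1 := by linarith
    have hS : T ≤ (h+g) * ρ * (1 - 2 * lam) := by
      have : ρ * (2 * lam) ≤ ε / (D-1) := by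
        rw [le_div_iff₀ hD1, he]; linarith [mul_le_mul_of_nonneg_right hρ1 h0.le]
      rw [hTd]
      have := mul_le_mul_of_nonneg_left this (add_nonneg hh hg)
      linarith
    have hhρ : h ≤ (h+g) * ρ := by
      have : (h+g)*ρ*(1-2*lam) ≤ (h+g) * ρ := by
        have : 0 ≤ (h+g)*ρ * lam := by positivity
        linarith
      linarith
    -- (D-1)^2 ρ (h+g) ≤ D g
    have k5 : (D-1)^2 * ((h+g) * ρ) ≤ D * g := by
      -- ρ (D-1)^2 = D - ρ D
      have e : ρ * (D-1)^2 = D - ρ * D := by linarith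
      have : (D-1)^2 * ((h+g) * ρ) = (h+g) * (D - ρ * D) := by rw [← e]; ring
      rw [this]
      have := mul_le_mul_of_nonneg_left hhρ (show 0 ≤ D by linarith)
      linarith
    have k6 : (D-1)^2 * ((h+g) * ρ * (1 - 2*lam)) ≤ (D-1)^2 * (C + ε * Z) := by
      have := mul_le_mul_of_nonneg_right k5 (show 0 ≤ 1 - 2*lam by linarith)
      linarith
    have := le_of_mul_le_mul_left k6 (by positivity)
    linarith

lemma sum_deg_inter {V : Type*} [DecidableEq V] (F : Finset (Finset V)) (Y : Finset V) :
    ∑ v ∈ Y, (deg F v : ℝ) = ∑ f ∈ F, ((f ∩ Y).card : ℝ) := by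
  have := dcount_card F (Y ∪ F.biUnion id)
    (fun f hf => (Finset.subset_biUnion_of_mem id hf).trans Finset.subset_union_right)
    (fun v => if v ∈ Y then 1 else 0)
  simp only [ite_mul, one_mul, zero_mul, Finset.sum_ite_mem, Finset.union_inter_cancel_left] at this
  rw [this]
  simp

lemma arith3 (g h lam β ε P P0 N C0 Z0 C1 Z1 T : ℝ) (hg : 0 ≤ g) (hh : 0 ≤ h) (h0 : 0 < lam)
    (h1 : lam < 1/6) (he : ε = 6 * lam)
    (hβ : 0 < β) (hβ4 : 4 / β ≤ ε)
    (hT : T = (h + g) * (3/7 - ε/2)) (hhT : h < T) (hP : g * (β * (1 - lam)) ≤ P)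
    (hN : P - P0 ≤ 2 * N) (hZ0 : 0 ≤ Z0) (hZ1 : 0 ≤ Z1)
    (c0 : 2 * (9/50) * (P + N) ≤ (9/50 + 1/2)^2 * β * C0 + (9/50)^2 * β * (3 * (g + h)) + Z0)
    (c1 : 2 * (3/50) * P0 ≤ (3/50 + 1/2)^2 * β * C1 + (3/50)^2 * β * (3 * g) + Z1)
    (s0 : C0 + ε * Z0 < T) (s1 : C1 + ε * Z1 < T - h) : False := by
  have hεβ : 4 ≤ ε * β := by rwa [div_le_iff₀ hβ] at hβ4
  have z0 : 4 * Z0 ≤ β * (ε * Z0) := by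
    have := mul_le_mul_of_nonneg_right hεβ hZ0; linarith
  have z1 : 4 * Z1 ≤ β * (ε * Z1) := by
    have := mul_le_mul_of_nonneg_right hεβ hZ1; linarith
  have b0 := mul_lt_mul_of_pos_left s0 hβ
  have b1 := mul_lt_mul_of_pos_left s1 hβ
  have hk : h - T < 0 := by linarith
  have b2 := mul_neg_of_pos_of_neg hβ hk
  have g1 : 0 ≤ β * g := by positivity
  have g2 : 0 ≤ β * h := by positivity
  have g3 : 0 ≤ β * (lam * g) := by positivity
  have g4 : 0 ≤ β * (lam * h) := by positivity
  subst hT he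
  nlinarith

lemma case_3 {V : Type*} [DecidableEq V] (H A B : Finset (Finset V))
    (hH : ∀ e ∈ H, e.card = 3) (hA : A ⊆ H) (hB : ∀ b ∈ B, b.card = 3)
    (hAd : ∀ e ∈ A, ∀ f ∈ A, e ≠ f → Disjoint e f)
    (hBd : ∀ e ∈ B, ∀ f ∈ B, e ≠ f → Disjoint e f)
    (hAB : ∀ e ∈ A, ∀ f ∈ B, Disjoint e f)
    (ε lam β : ℝ) (h0 : 0 < lam) (h1 : lam < 1/6) (he : ε = 6 * lam)
    (hβ : 0 < β) (hβ4 : 4 / β ≤ ε)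
    (hP1 : ∀ e ∈ H, (∑ v ∈ e, (deg H v : ℝ)) ≤ β)
    (hP2 : ∀ b ∈ B, β * (1 - lam) ≤ ∑ v ∈ b, (deg H v : ℝ))
    (T : ℝ) (hTd : T = ((A.card : ℝ) + B.card) * (3 / 7 - ε / 2)) (hT : (A.card : ℝ) < T) :
    Good H ε T := by
  set X := B.biUnion id with hX
  set Y := A.biUnion id with hY
  have hXY : Disjoint X Y := by
    rw [Finset.disjoint_left]
    intro v hv hv'
    simp only [hX, hY, Finset.mem_biUnion, id] at hv hv'
    obtain ⟨b, hb, hvb⟩ := hv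
    obtain ⟨a, ha, hva⟩ := hv'
    exact Finset.disjoint_left.mp (hAB a ha b hb) hva hvb
  set F := H.filter (fun f => ¬ Disjoint f X) with hF
  set F0 := F.filter (fun f => Disjoint f Y) with hF0
  have hFH : F ⊆ H := Finset.filter_subset _ _
  have hF0F : F0 ⊆ F := Finset.filter_subset _ _
  set U := X ∪ Y ∪ H.biUnion id with hU
  have hFU : ∀ f ∈ F, f ⊆ U := fun f hf => 
    (Finset.subset_biUnion_of_mem id (hFH hf)).trans Finset.subset_union_right
  have hne : ∀ f ∈ F, f.Nonempty := by
    intro f hf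
    rw [← Finset.card_pos, hH f (hFH hf)]; omega
  rcases lp_duality F U hFU (fun _ => 1) (fun _ => zero_le_one) ε (by linarith) T with
    ⟨y, hy, hl, hs⟩ | ⟨c, hc, hs⟩
  · refine good_of H ∅ F _ (by simp) hFH (by simp) (by simp) hne hFU ε (by linarith) y hy hl T ?_
    simpa using hs
  rcases lp_duality F0 U (fun f hf => hFU f (hF0F hf)) (fun _ => 1) (fun _ => zero_le_one) ε
    (by linarith) (T - A.card) with ⟨y, hy, hl, hs⟩ | ⟨c', hc', hs'⟩
  · refine good_of H A F0 _ hA (hF0F.trans hFH) hAd ?_ (fun f hf => hne f (hF0F hf))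
      (fun f hf => hFU f (hF0F hf)) ε (by linarith) y hy hl T (by linarith)
    intro a ha f hf
    have h2 : Disjoint f Y := (Finset.mem_filter.mp hf).2
    exact (h2.mono_right (Finset.subset_biUnion_of_mem id ha)).symm
  exfalso
  have core0 := core_ge3 H F U (X ∪ Y) hFH hFU Finset.subset_union_left β hβ hP1 c hc (9/50) (by norm_num)
  have core1 := core_ge3 H F0 U X (hF0F.trans hFH) (fun f hf => hFU f (hF0F hf))
    (Finset.subset_union_left.trans Finset.subset_union_left) β hβ hP1 c' hc' (3/50) (by norm_num)
  have hP : (B.card : ℝ) * (β * (1 - lam)) ≤ ∑ v ∈ X, (deg F v : ℝ) := by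
    refine (sum_X B hBd _ _ hP2).trans (le_of_eq ?_)
    refine Finset.sum_congr rfl fun v hv => ?_
    rw [hF, deg_F H X v hv]
  have hYd : ((F \ F0).card : ℝ) ≤ ∑ v ∈ Y, (deg F v : ℝ) := by
    rw [sum_deg_inter, Finset.card_eq_sum_ones]
    push_cast
    calc ∑ f ∈ F \ F0, (1:ℝ) ≤ ∑ f ∈ F \ F0, ((f ∩ Y).card : ℝ) := by
          refine Finset.sum_le_sum fun f hf => ?_
          simp only [hF0, Finset.mem_sdiff, Finset.mem_filter, not_and] at hf
          have := Finset.not_disjoint_iff_nonempty_inter.mp (hf.2 hf.1)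
          exact_mod_cast this.card_pos
      _ ≤ _ := Finset.sum_le_sum_of_subset_of_nonneg Finset.sdiff_subset (fun _ _ _ => by positivity)
  have hXd : ∑ v ∈ X, (deg F v : ℝ) - ∑ v ∈ X, (deg F0 v : ℝ) ≤ 2 * ((F \ F0).card : ℝ) := by
    rw [sum_deg_inter, sum_deg_inter, ← Finset.sum_sdiff hF0F, add_sub_cancel_right]
    calc ∑ f ∈ F \ F0, ((f ∩ X).card : ℝ) ≤ ∑ f ∈ F \ F0, (2:ℝ) := by
          refine Finset.sum_le_sum fun f hf => ?_
          simp only [hF0, Finset.mem_sdiff, Finset.mem_filter, not_and] at hf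
          have h2 := Finset.not_disjoint_iff_nonempty_inter.mp (hf.2 hf.1)
          have h3 := h2.card_pos
          have h4 : (f ∩ X).card + (f ∩ Y).card ≤ f.card := by
            rw [← Finset.card_union_of_disjoint]
            · exact Finset.card_le_card (Finset.union_subset Finset.inter_subset_left Finset.inter_subset_left)
            · exact hXY.mono Finset.inter_subset_right Finset.inter_subset_right
          rw [hH f (hFH hf.1)] at h4
          have : (f ∩ X).card ≤ 2 := by omega
          exact_mod_cast this
      _ = _ := by simp [mul_comm]
  rw [Finset.card_union_of_disjoint hXY, Finset.sum_union hXY] at core0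
  push_cast at core0
  have cx := card_X 3 B hB hBd
  have cy := card_X 3 A (fun a ha => hH a (hA ha)) hAd
  push_cast at cx cy
  rw [← hX] at cx
  rw [← hY] at cy
  rw [cx, cy] at core0
  rw [cx] at core1
  simp only [one_mul] at hs hs'
  have hZ : 0 ≤ ∑ f ∈ F, max 0 (1 - ∑ v ∈ f, c v) := Finset.sum_nonneg fun _ _ => le_max_left _ _
  have hZ' : 0 ≤ ∑ f ∈ F0, max 0 (1 - ∑ v ∈ f, c' v) := Finset.sum_nonneg fun _ _ => le_max_left _ _
  refine arith3 B.card A.card lam β ε _ _ _ _ _ _ _ T (by positivity) (by positivity) h0 h1 he hβ hβ4 hTd hT hP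
    hXd hZ hZ' ?_ core1 hs hs'
  refine le_trans ?_ (core0.trans (le_of_eq (by ring)))
  linarith

lemma edge_ineq1 (s c d d' z τ β : ℝ) (hs : 0 ≤ s) (hc : 0 ≤ c) (hz : 0 ≤ z) (hd' : 1 ≤ d')
    (hτ : 0 < τ) (hdd : d + d' ≤ β) (h : s ≤ c + z) :
    s * d ≤ τ * s + β^2/4 * (c / d' + z / τ) := by
  set D := max d' τ with hD
  have hD1 : d' ≤ D := le_max_left _ _
  have hD2 : τ ≤ D := le_max_right _ _
  have hD3 : D ≤ d' + τ := max_le (by linarith) (by linarith)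
  have hDp : 0 < D := by linarith
  have e1 : β - D ≤ β^2/4 / D := by
    rw [le_div_iff₀ hDp]; nlinarith [sq_nonneg (β/2 - D)]
  have e2 : s / D ≤ c / d' + z / τ := by
    calc s / D ≤ (c + z) / D := by gcongr
      _ = c / D + z / D := by ring
      _ ≤ _ := by gcongr
  have e3 : s * d ≤ s * (τ + β^2/4 / D) := mul_le_mul_of_nonneg_left (by linarith) hs
  have e4 : β^2/4 * (s / D) ≤ β^2/4 * (c / d' + z / τ) := mul_le_mul_of_nonneg_left e2 (by positivity)
  have e5 : s * (τ + β^2/4 / D) = τ * s + β^2/4 * (s / D) := by ring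
  linarith

lemma edge_ineq2 {V : Type*} [DecidableEq V] (f : Finset V) (hf : f.card = 2) (s c D : V → ℝ)
    (z τ β : ℝ) (hs : ∀ v, 0 ≤ s v) (hc : ∀ v, 0 ≤ c v) (hz : 0 ≤ z) (hτ : 0 < τ)
    (hD : ∀ v ∈ f, 1 ≤ D v) (hβ : ∑ v ∈ f, D v ≤ β) (h : ∀ u ∈ f, s u + c u ≤ ∑ v ∈ f, c v + z) :
    ∑ v ∈ f, s v * D v ≤ τ * ∑ v ∈ f, s v + β^2/4 * (∑ v ∈ f, c v / D v + 2 * (z / τ)) := by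
  obtain ⟨u, v, huv, rfl⟩ := Finset.card_eq_two.mp hf
  simp only [Finset.sum_pair huv] at *
  have hu := h u (by simp)
  have hv := h v (by simp)
  have k1 := edge_ineq1 (s u) (c v) (D u) (D v) z τ β (hs u) (hc v) hz (hD v (by simp)) hτ hβ (by linarith)
  have k2 := edge_ineq1 (s v) (c u) (D v) (D u) z τ β (hs v) (hc u) hz (hD u (by simp)) hτ
    (by linarith) (by linarith)
  linarith

lemma dual2 {V : Type*} [DecidableEq V] (H B : Finset (Finset V))
    (hH : ∀ e ∈ H, e.card = 2) (hB : ∀ b ∈ B, b.card = 2)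
    (hBd : ∀ e ∈ B, ∀ f ∈ B, e ≠ f → Disjoint e f)
    (lam β : ℝ) (h0 : 0 < lam) (h1 : lam < 1/6) (hβ : 0 < β)
    (hP1 : ∀ e ∈ H, (∑ v ∈ e, (deg H v : ℝ)) ≤ β)
    (hP2 : ∀ b ∈ B, β * (1 - lam) ≤ ∑ v ∈ b, (deg H v : ℝ))
    (X U : Finset V) (hX : X = B.biUnion id) (F : Finset (Finset V))
    (hF : F = H.filter (fun f => ¬ Disjoint f X)) (hFU : ∀ f ∈ F, f ⊆ U) (hXU : X ⊆ U)
    (c : V → ℝ) (hc : ∀ v, 0 ≤ c v ∧ c v ≤ 1) :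
    (B.card : ℝ) * (2 - 8 * lam) ≤ 2 * ∑ v ∈ X, c v + ∑ v ∈ U, c v
      + 2 / (lam * β) * ∑ f ∈ F, max 0 (1 - ∑ v ∈ f, c v) := by
  let sb : Finset V → ℝ := fun b => max 0 (1 - ∑ v ∈ b, c v)
  have hsb0 : ∀ b, 0 ≤ sb b := fun b => le_max_left _ _
  let s : V → ℝ := fun u => ∑ b ∈ B.filter (fun b => u ∈ b), sb b
  have hs0 : ∀ v, 0 ≤ s v := fun v => Finset.sum_nonneg fun b _ => hsb0 b
  have hsX : ∀ b ∈ B, ∀ v ∈ b, s v = sb b := by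
    intro b hb v hv
    have : B.filter (fun b => v ∈ b) = {b} := by
      ext b'
      simp only [Finset.mem_filter, Finset.mem_singleton]
      constructor
      · rintro ⟨h3, h4⟩
        by_contra hne
        exact Finset.disjoint_left.mp (hBd b' h3 b hb hne) h4 hv
      · rintro rfl; exact ⟨hb, hv⟩
    simp [s, this]
  have hsX0 : ∀ v, v ∉ X → s v = 0 := by
    intro v hv
    have : B.filter (fun b => v ∈ b) = ∅ := by
      rw [Finset.filter_eq_empty_iff]
      intro b hb hvb
      apply hv
      rw [hX, Finset.mem_biUnion]
      exact ⟨b, hb, hvb⟩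
    simp [s, this]
  have hpd : (B : Set (Finset V)).PairwiseDisjoint id := fun a ha b hb hab => hBd a ha b hb hab
  have hsumX : ∀ x : V → ℝ, ∑ v ∈ X, s v * x v = ∑ b ∈ B, sb b * ∑ v ∈ b, x v := by
    intro x
    rw [hX, Finset.sum_biUnion hpd]
    refine Finset.sum_congr rfl fun b hb => ?_
    rw [Finset.mul_sum]
    exact Finset.sum_congr rfl fun v hv => by rw [hsX b hb v hv]
  have hsumU : ∀ x : V → ℝ, ∑ v ∈ U, s v * x v = ∑ v ∈ X, s v * x v := by
    intro x
    symm
    refine Finset.sum_subset hXU fun v _ hv => ?_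
    rw [hsX0 v hv, zero_mul]
  set n := ∑ b ∈ B, sb b with hn
  have hn0 : 0 ≤ n := Finset.sum_nonneg fun b _ => hsb0 b
  have hng : n ≤ B.card := by
    calc n ≤ ∑ b ∈ B, (1:ℝ) := Finset.sum_le_sum fun b _ => max_le zero_le_one (by
            have := Finset.sum_nonneg (s := b) fun v _ => (hc v).1
            linarith)
      _ = _ := by simp
  have hgn : (B.card : ℝ) ≤ n + ∑ v ∈ X, c v := by
    have : ∑ v ∈ X, c v = ∑ b ∈ B, ∑ v ∈ b, c v := by
      rw [hX, Finset.sum_biUnion hpd]; simp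
    rw [this, hn, ← Finset.sum_add_distrib, Finset.card_eq_sum_ones]
    push_cast
    refine Finset.sum_le_sum fun b _ => ?_
    have : 1 - ∑ v ∈ b, c v ≤ sb b := le_max_right _ _
    linarith
  have hFH : F ⊆ H := by rw [hF]; exact Finset.filter_subset _ _
  have hdX : ∀ v ∈ X, (deg F v : ℝ) = deg H v := fun v hv => by rw [hF, deg_F H X v hv]
  set Q := ∑ v ∈ X, s v * (deg H v : ℝ) with hQ
  have hτ : 0 < lam * β := by positivity
  have hedge : ∀ f ∈ F, ∑ v ∈ f, s v * (deg H v : ℝ) ≤ (lam * β) * ∑ v ∈ f, s v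
      + β^2/4 * (∑ v ∈ f, c v / (deg H v : ℝ) + 2 * (max 0 (1 - ∑ v ∈ f, c v) / (lam * β))) := by
    intro f hf
    refine edge_ineq2 f (hH f (hFH hf)) s c _ _ _ β hs0 (fun v => (hc v).1) (le_max_left _ _) hτ ?_
      (hP1 f (hFH hf)) ?_
    · intro v hv
      have : 0 < deg H v := Finset.card_pos.mpr ⟨f, Finset.mem_filter.mpr ⟨hFH hf, hv⟩⟩
      exact_mod_cast this
    · intro u hu
      have hcu : c u ≤ ∑ v ∈ f, c v := Finset.single_le_sum (f := c) (fun v _ => (hc v).1) hu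
      have hz := le_max_right 0 (1 - ∑ v ∈ f, c v)
      have hz0 := le_max_left 0 (1 - ∑ v ∈ f, c v)
      by_cases hu' : u ∈ X
      · rw [hX, Finset.mem_biUnion] at hu'
        obtain ⟨b, hb, hub⟩ := hu'
        rw [hsX b hb u hub]
        have hcb : c u ≤ ∑ v ∈ b, c v := Finset.single_le_sum (f := c) (fun v _ => (hc v).1) hub
        have : sb b ≤ 1 - c u := max_le (by linarith [(hc u).2]) (by linarith)
        linarith
      · rw [hsX0 u hu']; linarith
  have hsum := Finset.sum_le_sum hedge
  rw [Finset.sum_add_distrib, ← Finset.mul_sum, ← Finset.mul_sum, Finset.sum_add_distrib,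
    ← Finset.mul_sum, ← Finset.sum_div, ← dcount_card F U hFU, ← dcount_card F U hFU,
    ← dcount_card F U hFU] at hsum
  have q1 : ∑ v ∈ U, s v * (deg F v : ℝ) = Q := by
    rw [hsumU]
    exact Finset.sum_congr rfl fun v hv => by rw [hdX v hv]
  have q2 : ∑ v ∈ U, c v / (deg H v : ℝ) * (deg F v : ℝ) ≤ ∑ v ∈ U, c v := by
    refine Finset.sum_le_sum fun v _ => ?_
    have hle : (deg F v : ℝ) ≤ deg H v := by
      unfold deg
      exact_mod_cast Finset.card_le_card (Finset.filter_subset_filter _ hFH)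
    rcases (Nat.cast_nonneg (α := ℝ) (deg H v)).lt_or_eq with h | h
    · rw [div_mul_eq_mul_div, div_le_iff₀ h]
      exact mul_le_mul_of_nonneg_left hle (hc v).1
    · rw [← h]; simpa using (hc v).1
  have q3 : β * Q - β^2/2 * n ≤ ∑ v ∈ U, s v * (deg H v : ℝ) * (deg F v : ℝ) := by
    have e1 : ∑ v ∈ U, s v * (deg H v : ℝ) * (deg F v : ℝ) = ∑ v ∈ X, s v * (deg H v : ℝ)^2 := by
      simp only [mul_assoc]
      rw [hsumU (fun v => (deg H v : ℝ) * (deg F v : ℝ))]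
      exact Finset.sum_congr rfl fun v hv => by rw [hdX v hv]; ring
    have e2 : ∑ v ∈ X, s v = 2 * n := by
      have := hsumX (fun _ => 1)
      simp only [mul_one, Finset.sum_const, nsmul_eq_mul] at this
      rw [this, hn, Finset.mul_sum]
      exact Finset.sum_congr rfl fun b hb => by rw [hB b hb]; push_cast; ring
    have e3 : β^2/2 * n = β^2/4 * ∑ v ∈ X, s v := by rw [e2]; ring
    rw [e1, e3, hQ, Finset.mul_sum, Finset.mul_sum, ← Finset.sum_sub_distrib]
    refine Finset.sum_le_sum fun v _ => ?_
    have := mul_nonneg (hs0 v) (sq_nonneg ((deg H v : ℝ) - β/2))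
    linarith
  have q4 : n * (β * (1 - lam)) ≤ Q := by
    rw [hQ, hsumX, hn, Finset.sum_mul]
    exact Finset.sum_le_sum fun b hb => mul_le_mul_of_nonneg_left (hP2 b hb) (hsb0 b)
  rw [q1] at hsum
  set Z := ∑ f ∈ F, max 0 (1 - ∑ v ∈ f, c v) with hZ
  have hfin : 2 * n * (1 - 4 * lam) ≤ ∑ v ∈ U, c v + 2 * (Z / (lam * β)) := by
    have hb2 : 0 < β^2/4 := by positivity
    refine le_of_mul_le_mul_left ?_ hb2
    have k1 := mul_le_mul_of_nonneg_right q4 (show 0 ≤ β * (1 - lam) from mul_nonneg hβ.le (by linarith))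
    have k2 := mul_le_mul_of_nonneg_left q2 hb2.le
    have k3 : 0 ≤ β^2 * (n * lam^2) := by positivity
    have k4 : n * (β * (1 - lam)) * (β * (1 - lam)) - β^2/2*n ≤ β^2/4 * (∑ v ∈ U, c v + 2 * (Z / (lam * β))) := by
      linarith
    refine le_trans ?_ k4
    linarith
  have : 2 * (Z / (lam * β)) = 2 / (lam * β) * Z := by ring
  rw [this] at hfin
  have := mul_le_mul_of_nonneg_right hng h0.le
  linarith

lemma trunc_ineq (R K E θ : ℝ) (hθ : 0 < θ) (hKE : K + E ≤ 1 - θ) :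
    R - 1/(4*θ) * (R - E)^2 ≤ min R (1 - K) := by
  have h : 0 ≤ 1/(4*θ) * (R - E)^2 := by positivity
  refine le_min (by linarith) ?_
  have e : (R - E) - θ ≤ 1/(4*θ) * (R - E)^2 := by
    rw [one_div_mul_eq_div, le_div_iff₀ (by positivity)]
    nlinarith [sq_nonneg (R - E - 2*θ)]
  linarith

lemma round2 {V : Type*} [DecidableEq V] [Nonempty V] (H A F : Finset (Finset V))
    (hH : ∀ e ∈ H, e.card = 2) (hA : A ⊆ H)
    (hAd : ∀ e ∈ A, ∀ f ∈ A, e ≠ f → Disjoint e f)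
    (X Y U : Finset V) (hY : Y = A.biUnion id) (hXY : Disjoint X Y)
    (hXU : X ⊆ U) (hYU : Y ⊆ U)
    (hF : F = H.filter (fun f => ¬ Disjoint f X)) (hFU : ∀ f ∈ F, f ⊆ U)
    (ε δ θ : ℝ) (hθ : 0 < θ) (hθ1 : θ < 1) (hε : ε ≤ 1) (hδ : 0 ≤ δ) (hδε : 3 * δ ≤ ε)
    (y : Finset V → ℝ) (hy : ∀ f, 0 ≤ y f ∧ y f ≤ δ)
    (hl : ∀ v ∈ U, ∑ f ∈ F.filter (fun f => v ∈ f), y f ≤ if v ∈ Y then 1/3 else 1) 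
    (T : ℝ) (hT : T ≤ 2/3 * A.card + (1 - θ - δ/θ) * ∑ f ∈ F, y f) :
    Good H ε T := by
  have hFH : F ⊆ H := by rw [hF]; exact Finset.filter_subset _ _
  set F0 := F.filter (fun f => Disjoint f Y) with hF0
  set F1 := F.filter (fun f => ¬ Disjoint f Y) with hF1
  have hF0F : F0 ⊆ F := Finset.filter_subset _ _
  have hF1F : F1 ⊆ F := Finset.filter_subset _ _
  have hstr : ∀ f ∈ F1, ∃ u, ∃ v, ∃ a, u ∈ X ∧ a ∈ A ∧ v ∈ a ∧ f = {u, v} := by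
    intro f hf
    have h1 := (Finset.mem_filter.mp hf)
    have h2 := h1.1
    rw [hF] at h2
    have h2 := Finset.mem_filter.mp h2
    obtain ⟨u, hu, huX⟩ := Finset.not_disjoint_iff.mp h2.2
    obtain ⟨v, hv, hvY⟩ := Finset.not_disjoint_iff.mp h1.2
    have huv : u ≠ v := by
      rintro rfl; exact Finset.disjoint_left.mp hXY huX hvY
    rw [hY, Finset.mem_biUnion] at hvY
    obtain ⟨a, ha, hva⟩ := hvY
    refine ⟨u, v, a, huX, ha, hva, ?_⟩
    symm
    apply Finset.eq_of_subset_of_card_le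
    · intro x hx
      simp only [Finset.mem_insert, Finset.mem_singleton] at hx
      rcases hx with rfl | rfl <;> assumption
    · rw [hH f h2.1, Finset.card_pair huv]
  choose! uX vY aA hfun using hstr
  have hAY : ∀ a ∈ A, ∀ v ∈ a, v ∈ Y := by
    intro a ha v hv
    rw [hY, Finset.mem_biUnion]; exact ⟨a, ha, hv⟩
  have hXnA : ∀ u ∈ X, ∀ a ∈ A, u ∉ a := fun u hu a ha hua =>
    Finset.disjoint_left.mp hXY hu (hAY a ha u hua)
  have hmemX : ∀ f ∈ F1, ∀ u ∈ X, (u ∈ f ↔ uX f = u) := by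
    intro f hf u hu
    obtain ⟨h1, h2, h3, h4⟩ := hfun f hf
    constructor
    · intro h
      rw [h4] at h
      simp only [Finset.mem_insert, Finset.mem_singleton] at h
      rcases h with h | h
      · exact h.symm
      · exact absurd (h ▸ h3) (hXnA u hu _ h2)
    · intro h
      rw [h4, h]; simp
  have hmemY : ∀ f ∈ F1, ∀ a ∈ A, ∀ v ∈ a, v ∈ f → aA f = a := by
    intro f hf a ha v hv h
    obtain ⟨h1, h2, h3, h4⟩ := hfun f hf
    rw [h4] at h
    simp only [Finset.mem_insert, Finset.mem_singleton] at h
    rcases h with h | h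
    · exact absurd (h ▸ hv) (hXnA _ h1 a ha)
    · by_contra hne
      exact Finset.disjoint_left.mp (hAd _ h2 a ha hne) (h ▸ h3) hv
  let η : Finset V → ℝ := fun f => (1 - θ) * y f
  have hη0 : ∀ f, 0 ≤ η f := fun f => mul_nonneg (by linarith) (hy f).1
  have hηy : ∀ f, η f ≤ y f := fun f => by
    have := mul_nonneg hθ.le (hy f).1
    simp only [η]; linarith
  have hηδ : ∀ f, η f ≤ δ := fun f => (hηy f).trans (hy f).2
  let r : V → Finset V → ℝ := fun u a => ∑ f ∈ (F1.filter (fun f => uX f = u)).filter (fun f => aA f = a), 3 * η f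
  have hr0 : ∀ u a, 0 ≤ r u a := fun u a => Finset.sum_nonneg fun f _ => by linarith [hη0 f]
  have hfib : ∀ (φ : Finset V → ℝ) u, ∑ a ∈ A, r u a * φ a =
      ∑ f ∈ F1.filter (fun f => uX f = u), 3 * η f * φ (aA f) := by
    intro φ u
    rw [← Finset.sum_fiberwise_of_maps_to (s := F1.filter (fun f => uX f = u)) (t := A) (g := aA)
      (fun f hf => (hfun f (Finset.mem_filter.mp hf).1).2.1)]
    refine Finset.sum_congr rfl fun a _ => ?_
    simp only [r]
    rw [Finset.sum_mul]
    refine Finset.sum_congr rfl fun f hf => ?_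
    rw [(Finset.mem_filter.mp hf).2]
  have hfibX : ∀ ψ : Finset V → ℝ, ∑ u ∈ X, ∑ f ∈ F1.filter (fun f => uX f = u), ψ f = ∑ f ∈ F1, ψ f :=
    fun ψ => Finset.sum_fiberwise_of_maps_to (fun f hf => (hfun f hf).1) ψ
  have hrle : ∀ u a, a ∈ A → r u a ≤ 6 * δ := by
    intro u a ha
    have hc : ((F1.filter (fun f => uX f = u)).filter (fun f => aA f = a)).card ≤ 2 := by
      calc _ ≤ (a.image (fun v => ({u, v} : Finset V))).card := by
            apply Finset.card_le_card
            intro f hf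
            simp only [Finset.mem_filter] at hf
            obtain ⟨h1, h2, h3, h4⟩ := hfun f hf.1.1
            rw [hf.1.2] at h4
            rw [hf.2] at h3
            rw [Finset.mem_image]
            exact ⟨vY f, h3, h4.symm⟩
        _ ≤ a.card := Finset.card_image_le
        _ = 2 := hH a (hA ha)
    calc r u a ≤ ∑ f ∈ (F1.filter (fun f => uX f = u)).filter (fun f => aA f = a), 3 * δ :=
          Finset.sum_le_sum fun f _ => by linarith [hηδ f]
      _ = ((F1.filter (fun f => uX f = u)).filter (fun f => aA f = a)).card * (3 * δ) := by simp
      _ ≤ 2 * (3 * δ) := mul_le_mul_of_nonneg_right (by exact_mod_cast hc) (by linarith)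
      _ = _ := by ring
  obtain ⟨ξ, hξ, hround⟩ := round_lemma A X (fun a => -1 + ∑ u ∈ X, r u a) r (1/(4*θ)) (fun _ => 0)
  have hξ0 : ∀ a, 0 ≤ ξ a := fun a => by rcases hξ a with h | h <;> rw [h]; norm_num
  have hξ1 : ∀ a, ξ a ≤ 1 := fun a => by rcases hξ a with h | h <;> rw [h]; norm_num
  let K : V → ℝ := fun u => ∑ f ∈ F0.filter (fun f => u ∈ f), η f
  let E : V → ℝ := fun u => ∑ f ∈ F1.filter (fun f => uX f = u), η f
  let R : V → ℝ := fun u => ∑ f ∈ F1.filter (fun f => uX f = u), 3 * η f * ξ (aA f)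
  have hR0 : ∀ u, 0 ≤ R u := fun u => Finset.sum_nonneg fun f _ =>
    mul_nonneg (by linarith [hη0 f]) (hξ0 _)
  have hE0 : ∀ u, 0 ≤ E u := fun u => Finset.sum_nonneg fun f _ => hη0 f
  have hsplit : ∀ v (ψ : Finset V → ℝ), ∑ f ∈ F.filter (fun f => v ∈ f), ψ f =
      ∑ f ∈ F0.filter (fun f => v ∈ f), ψ f + ∑ f ∈ F1.filter (fun f => v ∈ f), ψ f := by
    intro v ψ
    rw [← Finset.sum_filter_add_sum_filter_not (F.filter (fun f => v ∈ f)) (fun f => Disjoint f Y)]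
    congr 1
    · rw [hF0, Finset.filter_comm]
    · rw [hF1, Finset.filter_comm]
  have hfilX : ∀ u ∈ X, F1.filter (fun f => u ∈ f) = F1.filter (fun f => uX f = u) := fun u hu =>
    Finset.filter_congr fun f hf => hmemX f hf u hu
  have hηl : ∀ v ∈ U, ∑ f ∈ F.filter (fun f => v ∈ f), η f ≤ (1 - θ) * (if v ∈ Y then 1/3 else 1) := by
    intro v hv
    simp only [η]
    rw [← Finset.mul_sum]
    exact mul_le_mul_of_nonneg_left (hl v hv) (by linarith)
  have hKE : ∀ u ∈ X, K u + E u ≤ 1 - θ := by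
    intro u hu
    have := hηl u (hXU hu)
    rw [hsplit, hfilX u hu, if_neg (Finset.disjoint_left.mp hXY hu), mul_one] at this
    exact this
  let m : V → ℝ := fun u => if R u ≤ 1 - K u then 1 else (1 - K u) / R u
  have hm : ∀ u ∈ X, 0 ≤ m u ∧ m u ≤ 1 ∧ m u * R u = min (R u) (1 - K u) := by
    intro u hu
    have h1 := hKE u hu
    have h2 := hE0 u
    simp only [m]
    split_ifs with h
    · exact ⟨zero_le_one, le_rfl, by rw [one_mul, min_eq_left h]⟩
    · push Not at h
      have hRp : 0 < R u := by linarith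
      refine ⟨div_nonneg (by linarith) hRp.le, (div_le_one hRp).mpr h.le, ?_⟩
      rw [min_eq_right h.le, div_mul_cancel₀ _ hRp.ne']
  let p : Finset V → ℝ := fun f => m (uX f) * (3 * η f * ξ (aA f))
  have hp : ∀ f ∈ F1, 0 ≤ p f ∧ p f ≤ 3 * η f * ξ (aA f) ∧ p f ≤ ε := by
    intro f hf
    obtain ⟨m0, m1, -⟩ := hm _ (hfun f hf).1
    have h1 : 0 ≤ 3 * η f * ξ (aA f) := mul_nonneg (by linarith [hη0 f]) (hξ0 _)
    have h2 : p f ≤ 3 * η f * ξ (aA f) := mul_le_of_le_one_left h1 m1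
    refine ⟨mul_nonneg m0 h1, h2, h2.trans ?_⟩
    have := mul_le_of_le_one_right (show 0 ≤ 3 * η f by linarith [hη0 f]) (hξ1 (aA f))
    linarith [hηδ f]
  have hAF : ∀ a ∈ A, a ∉ F := by
    intro a ha haF
    rw [hF] at haF
    apply (Finset.mem_filter.mp haF).2
    rw [Finset.disjoint_right]
    exact fun u hu => hXnA u hu a ha
  have h01 : ∀ f ∈ F0, f ∉ F1 := fun f h1 h2 => (Finset.mem_filter.mp h2).2 (Finset.mem_filter.mp h1).2
  let Y' : Finset V → ℝ := fun f => (if f ∈ A then 1 - ξ f else 0) + ((if f ∈ F0 then η f else 0)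
    + (if f ∈ F1 then p f else 0))
  have hYA : ∀ f ∈ A, Y' f = 1 - ξ f := fun f hf => by
    simp only [Y']
    rw [if_pos hf, if_neg (fun h => hAF f hf (hF0F h)), if_neg (fun h => hAF f hf (hF1F h))]; ring
  have hY0 : ∀ f ∈ F0, Y' f = η f := fun f hf => by
    simp only [Y']
    rw [if_neg (fun h => hAF f h (hF0F hf)), if_pos hf, if_neg (h01 f hf)]; ring
  have hY1 : ∀ f ∈ F1, Y' f = p f := fun f hf => by
    simp only [Y']
    rw [if_neg (fun h => hAF f h (hF1F hf)), if_neg (fun h => h01 f h hf), if_pos hf]; ring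
  have hYn : ∀ f, f ∉ A → f ∉ F0 → f ∉ F1 → Y' f = 0 := fun f h1 h2 h3 => by
    simp only [Y']
    rw [if_neg h1, if_neg h2, if_neg h3]; ring
  have hcases : ∀ f, (0 ≤ Y' f ∧ Y' f ≤ 1) ∧ (Y' f = 1 ∨ Y' f ≤ ε) := by
    intro f
    by_cases h1 : f ∈ A
    · rw [hYA f h1]
      refine ⟨⟨by linarith [hξ1 f], by linarith [hξ0 f]⟩, ?_⟩
      rcases hξ f with h | h <;> rw [h]
      · left; ring
      · right; linarith
    by_cases h2 : f ∈ F0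
    · rw [hY0 f h2]
      have := hη0 f
      have := hηδ f
      exact ⟨⟨by linarith, by linarith⟩, Or.inr (by linarith)⟩
    by_cases h3 : f ∈ F1
    · rw [hY1 f h3]
      obtain ⟨a, _, b⟩ := hp f h3
      exact ⟨⟨by linarith, by linarith⟩, Or.inr (by linarith)⟩
    · rw [hYn f h1 h2 h3]
      exact ⟨⟨by linarith, by linarith⟩, Or.inr (by linarith)⟩
  refine ⟨Y', ?_, fun e => (hcases e).1, ?_, fun e _ => (hcases e).2, ?_⟩
  · intro e he
    exact hYn e (fun h => he (hA h)) (fun h => he (hFH (hF0F h))) (fun h => he (hFH (hF1F h)))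
  · intro v
    simp only [Y']
    rw [Finset.sum_add_distrib, Finset.sum_add_distrib, sum_ind H A hA, sum_ind H F0 (hF0F.trans hFH),
      sum_ind H F1 (hF1F.trans hFH)]
    by_cases hvX : v ∈ X
    · have h1 : A.filter (fun a => v ∈ a) = ∅ := by
        rw [Finset.filter_eq_empty_iff]
        exact fun a ha => hXnA v hvX a ha
      rw [h1, Finset.sum_empty, zero_add, hfilX v hvX]
      have h2 : ∑ f ∈ F1.filter (fun f => uX f = v), p f = m v * R v := by
        simp only [R, p]
        rw [Finset.mul_sum]
        exact Finset.sum_congr rfl fun f hf => by rw [(Finset.mem_filter.mp hf).2]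
      rw [h2, (hm v hvX).2.2]
      have := min_le_right (R v) (1 - K v)
      change K v + _ ≤ 1
      linarith
    by_cases hvY : v ∈ Y
    · have hvY' := hvY
      rw [hY, Finset.mem_biUnion] at hvY'
      obtain ⟨a, ha, hva⟩ := hvY'
      simp only [id] at hva
      have h1 : A.filter (fun a => v ∈ a) = {a} := by
        ext b
        simp only [Finset.mem_filter, Finset.mem_singleton]
        constructor
        · rintro ⟨h3, h4⟩
          by_contra hne
          exact Finset.disjoint_left.mp (hAd b h3 a ha hne) h4 hva
        · rintro rfl; exact ⟨ha, hva⟩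
      have h2 : F0.filter (fun f => v ∈ f) = ∅ := by
        rw [Finset.filter_eq_empty_iff]
        intro f hf hvf
        exact Finset.disjoint_left.mp (Finset.mem_filter.mp hf).2 hvf hvY
      have h3 := hηl v (hYU hvY)
      rw [hsplit, h2, Finset.sum_empty, zero_add, if_pos hvY] at h3
      rw [h1, h2, Finset.sum_empty, zero_add, Finset.sum_singleton]
      have h4 : ∑ f ∈ F1.filter (fun f => v ∈ f), p f ≤ ∑ f ∈ F1.filter (fun f => v ∈ f), 3 * ξ a * η f := by
        refine Finset.sum_le_sum fun f hf => ?_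
        have hf' := Finset.mem_filter.mp hf
        have := (hp f hf'.1).2.1
        rw [hmemY f hf'.1 a ha v hva hf'.2] at this
        linarith
      rw [← Finset.mul_sum] at h4
      have h5 : ∑ f ∈ F1.filter (fun f => v ∈ f), η f ≤ 1/3 := by linarith
      have h6 := mul_le_mul_of_nonneg_left h5 (show 0 ≤ 3 * ξ a by linarith [hξ0 a])
      linarith
    · have h1 : A.filter (fun a => v ∈ a) = ∅ := by
        rw [Finset.filter_eq_empty_iff]
        exact fun a ha hva => hvY (hAY a ha v hva)
      have h2 : F1.filter (fun f => v ∈ f) = ∅ := by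
        rw [Finset.filter_eq_empty_iff]
        intro f hf hvf
        obtain ⟨k1, k2, k3, k4⟩ := hfun f hf
        rw [k4] at hvf
        simp only [Finset.mem_insert, Finset.mem_singleton] at hvf
        rcases hvf with h | h
        · exact hvX (h ▸ k1)
        · exact hvY (h ▸ hAY _ k2 _ k3)
      rw [h1, h2, Finset.sum_empty, Finset.sum_empty, zero_add, add_zero]
      by_cases hvU : v ∈ U
      · have h3 := hηl v hvU
        rw [hsplit, h2, Finset.sum_empty, add_zero, if_neg hvY] at h3
        linarith
      · have h3 : F0.filter (fun f => v ∈ f) = ∅ := by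
          rw [Finset.filter_eq_empty_iff]
          exact fun f hf hvf => hvU (hFU f (hF0F hf) hvf)
        rw [h3]; simp
  · refine hT.trans ?_
    simp only [Y']
    rw [Finset.sum_add_distrib, Finset.sum_add_distrib, sum_ind' H A hA, sum_ind' H F0 (hF0F.trans hFH),
      sum_ind' H F1 (hF1F.trans hFH)]
    have t1 : ∑ f ∈ F1, p f = ∑ u ∈ X, m u * R u := by
      rw [← hfibX]
      refine Finset.sum_congr rfl fun u _ => ?_
      simp only [R, p]
      rw [Finset.mul_sum]
      exact Finset.sum_congr rfl fun f hf => by rw [(Finset.mem_filter.mp hf).2]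
    have t2 : ∑ u ∈ X, R u - 1/(4*θ) * ∑ u ∈ X, (R u - E u)^2 ≤ ∑ f ∈ F1, p f := by
      rw [t1, Finset.mul_sum, ← Finset.sum_sub_distrib]
      refine Finset.sum_le_sum fun u hu => ?_
      rw [(hm u hu).2.2]
      exact trunc_ineq _ _ _ θ hθ (hKE u hu)
    have t3 : ∀ u, ∑ a ∈ A, r u a * (ξ a - 1/3) = R u - E u := by
      intro u
      rw [hfib (fun a => ξ a - 1/3)]
      simp only [R, E]
      rw [← Finset.sum_sub_distrib]
      exact Finset.sum_congr rfl fun f _ => by ring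
    have t4 : ∑ a ∈ A, (-1 + ∑ u ∈ X, r u a) * (ξ a - 1/3) =
        - ∑ a ∈ A, ξ a + A.card / 3 + (∑ u ∈ X, R u - ∑ u ∈ X, E u) := by
      have e1 : ∑ u ∈ X, R u - ∑ u ∈ X, E u = ∑ a ∈ A, (∑ u ∈ X, r u a) * (ξ a - 1/3) := by
        rw [← Finset.sum_sub_distrib]
        simp_rw [← t3, Finset.sum_mul]
        rw [Finset.sum_comm]
      rw [e1]
      simp_rw [add_mul]
      rw [Finset.sum_add_distrib]
      congr 1
      simp only [neg_mul, one_mul, neg_sub, Finset.sum_sub_distrib, Finset.sum_const, nsmul_eq_mul]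
      ring
    have t5 : ∑ u ∈ X, E u = ∑ f ∈ F1, η f := hfibX η
    have t6 : ∑ u ∈ X, ∑ a ∈ A, (r u a)^2 ≤ 18 * δ * ∑ f ∈ F1, η f := by
      calc ∑ u ∈ X, ∑ a ∈ A, (r u a)^2 ≤ ∑ u ∈ X, ∑ a ∈ A, r u a * (6 * δ) := by
            refine Finset.sum_le_sum fun u _ => Finset.sum_le_sum fun a ha => ?_
            rw [sq]; exact mul_le_mul_of_nonneg_left (hrle u a ha) (hr0 u a)
        _ = ∑ u ∈ X, ∑ f ∈ F1.filter (fun f => uX f = u), 3 * η f * (6 * δ) :=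
            Finset.sum_congr rfl fun u _ => hfib (fun _ => 6 * δ) u
        _ = ∑ f ∈ F1, 3 * η f * (6 * δ) := hfibX _
        _ = _ := by rw [Finset.mul_sum]; exact Finset.sum_congr rfl fun f _ => by ring
    have t7 : ∑ f ∈ F1, η f ≤ ∑ f ∈ F, y f :=
      (Finset.sum_le_sum fun f _ => hηy f).trans
        (Finset.sum_le_sum_of_subset_of_nonneg hF1F fun f _ _ => (hy f).1)
    have t8 : ∑ f ∈ F0, η f + ∑ f ∈ F1, η f = (1 - θ) * ∑ f ∈ F, y f := by
      rw [hF0, hF1, Finset.sum_filter_add_sum_filter_not, Finset.mul_sum]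
    simp only [zero_add, t3, t4] at hround
    have t9 : ∑ u ∈ X, ((0:ℝ)^2 + 2/9 * ∑ a ∈ A, (r u a)^2) = 2/9 * ∑ u ∈ X, ∑ a ∈ A, (r u a)^2 := by
      rw [Finset.mul_sum]; exact Finset.sum_congr rfl fun _ _ => by ring
    have t10 : 1/(4*θ) * ∑ u ∈ X, ((0:ℝ)^2 + 2/9 * ∑ a ∈ A, (r u a)^2) ≤ δ/θ * ∑ f ∈ F, y f := by
      rw [t9]
      calc 1/(4*θ) * (2/9 * ∑ u ∈ X, ∑ a ∈ A, (r u a)^2)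
          ≤ 1/(4*θ) * (2/9 * (18 * δ * ∑ f ∈ F, y f)) := by
            have : 18 * δ * ∑ f ∈ F1, η f ≤ 18 * δ * ∑ f ∈ F, y f :=
              mul_le_mul_of_nonneg_left t7 (by linarith)
            gcongr
            linarith
        _ = _ := by field_simp; ring
    rw [Finset.sum_sub_distrib, Finset.sum_const, nsmul_eq_mul, mul_one]
    simp only [zero_pow two_ne_zero, zero_add] at hround t10
    linarith

lemma case_2 {V : Type*} [DecidableEq V] (H A B : Finset (Finset V))
    (hH : ∀ e ∈ H, e.card = 2) (hA : A ⊆ H) (hB : ∀ b ∈ B, b.card = 2)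
    (hAd : ∀ e ∈ A, ∀ f ∈ A, e ≠ f → Disjoint e f)
    (hBd : ∀ e ∈ B, ∀ f ∈ B, e ≠ f → Disjoint e f)
    (hAB : ∀ e ∈ A, ∀ f ∈ B, Disjoint e f)
    (ε lam β : ℝ) (h0 : 0 < lam) (h1 : lam < 1/6) (he : ε = 6 * lam)
    (hβ : 0 < β) (hβ4 : 32 / lam^3 ≤ β)
    (hP1 : ∀ e ∈ H, (∑ v ∈ e, (deg H v : ℝ)) ≤ β)
    (hP2 : ∀ b ∈ B, β * (1 - lam) ≤ ∑ v ∈ b, (deg H v : ℝ))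
    (T : ℝ) (hTd : T = ((A.card : ℝ) + B.card) * (2 / 3 - ε)) (hT : (A.card : ℝ) < T) :
    Good H ε T := by
  have hnV : Nonempty V := by
    by_contra hV
    rw [not_nonempty_iff] at hV
    have hAe : A = ∅ := by
      rw [Finset.eq_empty_iff_forall_notMem]
      intro a ha
      have h2 := hH a (hA ha)
      rw [Finset.eq_empty_of_isEmpty a] at h2
      simp at h2
    have hBe : B = ∅ := by
      rw [Finset.eq_empty_iff_forall_notMem]
      intro a ha
      have h2 := hB a ha
      rw [Finset.eq_empty_of_isEmpty a] at h2
      simp at h2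
    rw [hTd, hAe, hBe] at hT
    simp at hT
  set X := B.biUnion id with hX
  set Y := A.biUnion id with hY
  have hXY : Disjoint X Y := by
    rw [Finset.disjoint_left]
    intro v hv hv'
    simp only [hX, hY, Finset.mem_biUnion, id] at hv hv'
    obtain ⟨b, hb, hvb⟩ := hv
    obtain ⟨a, ha, hva⟩ := hv'
    exact Finset.disjoint_left.mp (hAB a ha b hb) hva hvb
  set F := H.filter (fun f => ¬ Disjoint f X) with hF
  have hFH : F ⊆ H := Finset.filter_subset _ _
  set U := X ∪ Y ∪ H.biUnion id with hU
  have hFU : ∀ f ∈ F, f ⊆ U := fun f hf => 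
    (Finset.subset_biUnion_of_mem id (hFH hf)).trans Finset.subset_union_right
  have hXU : X ⊆ U := Finset.subset_union_left.trans Finset.subset_union_left
  have hYU : Y ⊆ U := Finset.subset_union_right.trans Finset.subset_union_left
  have hδ : 2/(3*(lam * β)) ≤ lam^2/48 := by
    rw [div_le_div_iff₀ (by positivity) (by norm_num)]
    rw [div_le_iff₀ (by positivity)] at hβ4
    linarith
  have hδ0 : 0 ≤ 2/(3*(lam * β)) := by positivity
  have hg : (0:ℝ) ≤ B.card := by positivity
  have hh : (0:ℝ) ≤ A.card := by positivity
  have hlsq : lam^2 ≤ lam := by nlinarith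
  rcases lp_duality F U hFU (fun v => if v ∈ Y then 1/3 else 1) 
    (fun v => by split_ifs <;> norm_num) (2/(3*(lam * β))) hδ0 (2/3 * B.card * (1 - 4 * lam)) with
    ⟨y, hy, hl, hs⟩ | ⟨c, hc, hs⟩
  · refine round2 H A F hH hA hAd X Y U hY hXY hXU hYU hF hFU ε (2/(3*(lam * β))) lam h0 (by linarith)
      (by linarith) hδ0 (by linarith) y hy hl T ?_
    have k1 : 2/(3*(lam * β)) / lam ≤ lam/48 := by
      rw [div_le_iff₀ h0]; linarith
    have k2 : 1 - 2 * lam ≤ 1 - lam - 2/(3*(lam * β)) / lam := by linarith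
    have k3 : (1 - 2 * lam) * (2/3 * B.card * (1 - 4 * lam)) ≤
        (1 - lam - 2/(3*(lam * β)) / lam) * ∑ f ∈ F, y f := by
      refine mul_le_mul k2 hs ?_ (by linarith)
      exact mul_nonneg (by positivity) (by linarith)
    have k4 : 0 ≤ (B.card : ℝ) * lam := by positivity
    have k5 : 0 ≤ (A.card : ℝ) * lam := by positivity
    have k6 : 0 ≤ (B.card : ℝ) * lam^2 := by positivity
    rw [hTd, he]
    nlinarith
  · exfalso
    have hd := dual2 H B hH hB hBd lam β h0 h1 hβ hP1 hP2 X U hX F hF hFU hXU c hc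
    have e1 : ∑ v ∈ U, 1/3 * c v + ∑ v ∈ X, 2/3 * c v ≤ ∑ v ∈ U, (if v ∈ Y then 1/3 else 1) * c v := by
      rw [← Finset.inter_eq_right.mpr hXU, ← Finset.sum_ite_mem, ← Finset.sum_add_distrib]
      refine Finset.sum_le_sum fun v _ => ?_
      have hcv := (hc v).1
      by_cases hx : v ∈ X
      · rw [if_pos hx, if_neg (Finset.disjoint_left.mp hXY hx)]; linarith
      · rw [if_neg hx]; split_ifs <;> linarith
    rw [← Finset.mul_sum, ← Finset.mul_sum] at e1
    have e2 : 2/(3*(lam * β)) = 1/3 * (2/(lam * β)) := by field_simp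
    rw [e2] at hs
    linarith

theorem hedcs_restricted_fractional_matching {V : Type*} [DecidableEq V]
    (d : ℕ) (hd : 2 ≤ d)
    (E : Finset (Finset V)) (hE : ∀ e ∈ E, e.card = d)
    (ε : ℝ) (hε0 : 0 < ε) (hε1 : ε < 1)
    (lam : ℝ) (hlam : lam = ε / 6)
    (β : ℝ) (hβ : 8 * (d : ℝ) ^ 2 / ((d : ℝ) - 1) / lam ^ 3 ≤ β)
    (H : Finset (Finset V)) (hHE : H ⊆ E)
    (hP1 : ∀ e ∈ H, (∑ v ∈ e, (deg H v : ℝ)) ≤ β)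
    (hP2 : ∀ e ∈ E, e ∉ H → β * (1 - lam) ≤ ∑ v ∈ e, (deg H v : ℝ)) :
    ∃ y : Finset V → ℝ,
      (∀ e, e ∉ H → y e = 0) ∧
      (∀ e, 0 ≤ y e ∧ y e ≤ 1) ∧
      (∀ v : V, ∑ e ∈ H.filter (fun e => v ∈ e), y e ≤ 1) ∧
      (∀ e ∈ H, y e = 1 ∨ y e ≤ ε) ∧
      (matchNum E : ℝ) * ((d : ℝ) / ((d : ℝ) ^ 2 - d + 1) - ε / ((d : ℝ) - 1))
        ≤ ∑ e ∈ H, y e := by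
  change Good H ε ((matchNum E : ℝ) * ((d : ℝ) / ((d : ℝ) ^ 2 - d + 1) - ε / ((d : ℝ) - 1)))
  obtain ⟨M, hM, hMc⟩ := Finset.exists_mem_eq_sup
    (E.powerset.filter (fun M => ∀ e ∈ M, ∀ f ∈ M, e ≠ f → e ∩ f = ∅)) ⟨∅, by simp⟩ Finset.card
  have hMn : matchNum E = M.card := hMc
  rw [Finset.mem_filter, Finset.mem_powerset] at hM
  obtain ⟨hME, hMd⟩ := hM
  have hMd' : ∀ e ∈ M, ∀ f ∈ M, e ≠ f → Disjoint e f := fun e he f hf hne =>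
    Finset.disjoint_iff_inter_eq_empty.mpr (hMd e he f hf hne)
  set A := M.filter (fun e => e ∈ H) with hA
  set B := M.filter (fun e => e ∉ H) with hB
  have hAM : A ⊆ M := Finset.filter_subset _ _
  have hBM : B ⊆ M := Finset.filter_subset _ _
  have hAH : A ⊆ H := fun a ha => (Finset.mem_filter.mp ha).2
  have hBH : ∀ b ∈ B, b ∉ H := fun a ha => (Finset.mem_filter.mp ha).2
  have hcard : (matchNum E : ℝ) = (A.card : ℝ) + B.card := by
    rw [hMn, ← Finset.card_filter_add_card_filter_not (s := M) (fun e => e ∈ H)]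
    push_cast; rfl
  rw [hcard]
  have hAd : ∀ e ∈ A, ∀ f ∈ A, e ≠ f → Disjoint e f := fun e he f hf => hMd' e (hAM he) f (hAM hf)
  have hBd : ∀ e ∈ B, ∀ f ∈ B, e ≠ f → Disjoint e f := fun e he f hf => hMd' e (hBM he) f (hBM hf)
  have hAB : ∀ e ∈ A, ∀ f ∈ B, Disjoint e f := fun e he f hf => hMd' e (hAM he) f (hBM hf) (by
    rintro rfl; exact hBH e hf (hAH he))
  have hHc : ∀ e ∈ H, e.card = d := fun e he => hE e (hHE he)
  have hBc : ∀ e ∈ B, e.card = d := fun e he => hE e (hME (hBM he))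
  have hPB : ∀ b ∈ B, β * (1 - lam) ≤ ∑ v ∈ b, (deg H v : ℝ) := fun b hb =>
    hP2 b (hME (hBM hb)) (hBH b hb)
  have h0 : 0 < lam := by linarith
  have h1 : lam < 1/6 := by linarith
  have he : ε = 6 * lam := by linarith
  have hd2 : (2:ℝ) ≤ d := by exact_mod_cast hd
  have hβ32 : 32 / lam^3 ≤ β := by
    refine le_trans ?_ hβ
    gcongr
    rw [le_div_iff₀ (by linarith)]
    nlinarith [sq_nonneg ((d:ℝ) - 2)]
  have hβ0 : 0 < β := lt_of_lt_of_le (by positivity) hβ32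
  have hβ4 : 4 / β ≤ ε := by
    rw [div_le_iff₀ hβ0, he]
    rw [div_le_iff₀ (by positivity)] at hβ32
    have : lam^3 ≤ lam := by nlinarith [sq_nonneg lam]
    have := mul_le_mul_of_nonneg_left this hβ0.le
    linarith
  by_cases hT : ((A.card : ℝ) + B.card) * ((d : ℝ) / ((d : ℝ) ^ 2 - d + 1) - ε / ((d : ℝ) - 1)) ≤ A.card
  · exact good_of H A ∅ ∅ hAH (by simp) hAd (by simp) (by simp) (by simp) ε hε1.le (fun _ => 0)
      (fun _ => ⟨le_rfl, hε0.le⟩) (by simp) _ (by simpa using hT)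
  push Not at hT
  rcases (by omega : d = 2 ∨ d = 3 ∨ 4 ≤ d) with h | h | h
  · subst h
    refine case_2 H A B hHc hAH hBc hAd hBd hAB ε lam β h0 h1 he hβ0 hβ32 hP1 hPB _ ?_ hT
    norm_num
  · subst h
    refine case_3 H A B hHc hAH hBc hAd hBd hAB ε lam β h0 h1 he hβ0 hβ4 hP1 hPB _ ?_ hT
    norm_num
  · exact case_ge4 d h H A B hHc hBc hBd ε lam β h0 h1 he hβ0 hβ4 hP1 hPB hT
end

section
/- There is an absolute constant C > 0 with the following property. Let G = (V, E) be a d-uniform hypergraph on n vertices with d ≥ 2, let 0 < λ < 1 and β > 0, and let A and B be any two subgraphs each of which is an HEDCS(G, β, (1−λ)β). Then for every vertex v ∈ V, |d_A(v) − d_B(v)| ≤ C·√n·λ^{1/2}·β. -/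
open Finset

/-- `IsHEDCS E H β β⁻`: `H ⊆ E`, every edge of `H` has degree-sum at most `β`,
and every edge of `E \ H` has degree-sum at least `β⁻`. -/
def IsHEDCS {V : Type*} [DecidableEq V] (E H : Finset (Finset V)) (β βm : ℝ) : Prop :=
  H ⊆ E ∧ (∀ e ∈ H, (∑ v ∈ e, (deg H v : ℝ)) ≤ β) ∧
    (∀ e ∈ E, e ∉ H → βm ≤ ∑ v ∈ e, (deg H v : ℝ))

/-- Double counting. -/
theorem sum_mul_deg {V : Type} [Fintype V] [DecidableEq V] (H : Finset (Finset V)) (f : V → ℝ) :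
    ∑ v, f v * (deg H v : ℝ) = ∑ e ∈ H, ∑ v ∈ e, f v := by
  have h1 : ∀ v, f v * (deg H v : ℝ) = ∑ e ∈ H, if v ∈ e then f v else 0 := by
    intro v
    rw [← Finset.sum_filter, Finset.sum_const, deg, nsmul_eq_mul, mul_comm]
  simp_rw [h1]
  rw [Finset.sum_comm]
  refine Finset.sum_congr rfl fun e _ => ?_
  rw [Finset.sum_ite_mem, Finset.univ_inter]

/-- Edge count bound. -/
theorem four_card_le {V : Type} [Fintype V] [DecidableEq V] (d : ℕ) (hd : 2 ≤ d)
    (H : Finset (Finset V)) (hH : ∀ e ∈ H, e.card = d) (β : ℝ) (hβ : 0 < β)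
    (h : ∀ e ∈ H, (∑ v ∈ e, (deg H v : ℝ)) ≤ β) :
    4 * (H.card : ℝ) ≤ Fintype.card V * β := by
  have h1 : ∑ v, (deg H v : ℝ) = d * H.card := by
    have := sum_mul_deg H (fun _ => 1)
    simp only [one_mul] at this
    rw [this, Finset.sum_congr rfl (g := fun _ => (d : ℝ))]
    · simp [mul_comm]
    · intro e he
      simp [hH e he]
  have h2 : ∑ v, (deg H v : ℝ) ^ 2 ≤ H.card * β := by
    simp_rw [pow_two]
    rw [sum_mul_deg H (fun v => (deg H v : ℝ)), ← nsmul_eq_mul]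
    exact Finset.sum_le_card_nsmul _ _ _ h
  have h3 := sq_sum_le_card_mul_sum_sq (s := (Finset.univ : Finset V)) (f := fun v => (deg H v : ℝ))
  rw [h1, Finset.card_univ] at h3
  have hd' : (2 : ℝ) ≤ d := by exact_mod_cast hd
  rcases Nat.eq_zero_or_pos H.card with h0 | h0
  · rw [h0]
    simp only [Nat.cast_zero, mul_zero]
    positivity
  · have h0' : (0 : ℝ) < H.card := by exact_mod_cast h0
    have h4 : (Fintype.card V : ℝ) * ∑ v, (deg H v : ℝ) ^ 2 ≤ Fintype.card V * (H.card * β) := by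
      gcongr
    have h5 : (2 * (H.card : ℝ)) ^ 2 ≤ (d * H.card) ^ 2 := by gcongr
    refine le_of_mul_le_mul_right ?_ h0'
    nlinarith

/-- Degree Distribution Lemma: there is an absolute constant `C > 0` such that
for any two HEDCS `A`, `B` of the same `d`-uniform hypergraph on `n` vertices
with parameters `(β, (1−λ)β)`, every vertex satisfies
`|d_A(v) − d_B(v)| ≤ C·√n·λ^{1/2}·β`. -/
theorem degree_distribution :
    ∃ C : ℝ, 0 < C ∧
      ∀ (V : Type) [Fintype V] [DecidableEq V],
      ∀ d : ℕ, 2 ≤ d →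
      ∀ E : Finset (Finset V), (∀ e ∈ E, e.card = d) →
      ∀ lam β : ℝ, 0 < lam → lam < 1 → 0 < β →
      ∀ A B : Finset (Finset V),
        IsHEDCS E A β ((1 - lam) * β) →
        IsHEDCS E B β ((1 - lam) * β) →
        ∀ v : V, |(deg A v : ℝ) - (deg B v : ℝ)|
          ≤ C * Real.sqrt (Fintype.card V) * Real.sqrt lam * β := by
  refine ⟨1, one_pos, ?_⟩
  intro V _ _ d hd E hE lam β hl _ hβ A B ⟨hAE, hA1, hA2⟩ ⟨hBE, hB1, hB2⟩ v
  have cA := four_card_le d hd A (fun e he => hE e (hAE he)) β hβ hA1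
  have cB := four_card_le d hd B (fun e he => hE e (hBE he)) β hβ hB1
  set δ : V → ℝ := fun v => (deg A v : ℝ) - (deg B v : ℝ) with hδ
  have key : ∑ v, δ v ^ 2 = ∑ e ∈ A \ B, ∑ v ∈ e, δ v - ∑ e ∈ B \ A, ∑ v ∈ e, δ v := by
    rw [Finset.sum_sdiff_sub_sum_sdiff, ← sum_mul_deg, ← sum_mul_deg, ← Finset.sum_sub_distrib]
    refine Finset.sum_congr rfl fun v _ => ?_
    simp only [hδ]
    ring
  have k1 : ∑ e ∈ A \ B, ∑ v ∈ e, δ v ≤ A.card * (lam * β) := by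
    calc _ ≤ (A \ B).card • (lam * β) := by
          refine Finset.sum_le_card_nsmul _ _ _ fun e he => ?_
          rw [Finset.mem_sdiff] at he
          have := hA1 e he.1
          have := hB2 e (hAE he.1) he.2
          simp only [hδ, Finset.sum_sub_distrib]
          linarith
      _ ≤ _ := by
          rw [nsmul_eq_mul]
          gcongr
          exact Finset.sdiff_subset
  have k2 : ∑ e ∈ B \ A, ∑ v ∈ e, -δ v ≤ B.card * (lam * β) := by
    calc _ ≤ (B \ A).card • (lam * β) := by
          refine Finset.sum_le_card_nsmul _ _ _ fun e he => ?_
          rw [Finset.mem_sdiff] at he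
          have := hB1 e he.1
          have := hA2 e (hBE he.1) he.2
          simp only [hδ, Finset.sum_sub_distrib, Finset.sum_neg_distrib]
          linarith
      _ ≤ _ := by
          rw [nsmul_eq_mul]
          gcongr
          exact Finset.sdiff_subset
  simp only [Finset.sum_neg_distrib] at k2
  have hv : δ v ^ 2 ≤ ∑ v, δ v ^ 2 :=
    Finset.single_le_sum (f := fun v => δ v ^ 2) (fun i _ => sq_nonneg _) (Finset.mem_univ v)
  have hlb : 0 < lam * β := mul_pos hl hβ
  have hn : (0 : ℝ) ≤ Fintype.card V := Nat.cast_nonneg _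
  have m1 := mul_le_mul_of_nonneg_right cA hlb.le
  have m2 := mul_le_mul_of_nonneg_right cB hlb.le
  have m3 : 0 ≤ Fintype.card V * β * (lam * β) := by positivity
  refine abs_le_of_sq_le_sq (a := δ v) ?_ (by positivity)
  rw [mul_pow, mul_pow, mul_pow, Real.sq_sqrt hn, Real.sq_sqrt hl.le]
  nlinarith
end

section
/- Let G = (V, E) be a d-uniform hypergraph on n vertices with d ≥ 2, let α > 2, 0 < λ < 1, and p ∈ (0, 1) with p < 1 − 2/α, and let β be a real number with β ≥ 15d(αd)²·λ^{−2}·log n. Set β_H = (1 − λ/α)·β/p and β_H⁻ = β_H − (d−1), and let H be an HEDCS(G, β_H, β_H⁻). Let G_p be the random subgraph of G in which each edge of E is included independently with probability p, and let H_p = H ∩ G_p. Then with probability at least 1 − 2/n^{5d−1}, simultaneously: (1) for every vertex v ∈ V, |d_{H_p}(v) − p·d_H(v)| ≤ (λ/(αd))·β; and (2) H_p is an HEDCS(G_p, β, (1−λ)β). -/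
open Finset

/-- The probability, under independent edge sampling with probability `p` from
the edge set `E`, that the sampled edge set lies in the event `A`. -/
noncomputable def sampleProb {V : Type*} [DecidableEq V] (E : Finset (Finset V)) (p : ℝ)
    (A : Set (Finset (Finset V))) : ℝ :=
  ∑ S ∈ E.powerset, Set.indicator A (fun S => p ^ S.card * (1 - p) ^ (E.card - S.card)) S

/-- Moment generating function of the number of sampled edges in `A`. -/
theorem mgf_eq {V : Type*} [DecidableEq V] (E A : Finset (Finset V)) (hA : A ⊆ E) (p s : ℝ) :
    ∑ S ∈ E.powerset, p ^ S.card * (1 - p) ^ (E.card - S.card) *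
      Real.exp (s * ((A ∩ S).card : ℝ)) = (p * Real.exp s + (1 - p)) ^ A.card := by
  have h := Finset.prod_add (fun e : Finset V => p * (if e ∈ A then Real.exp s else 1))
    (fun _ => 1 - p) E
  have h2 : ∏ e ∈ E, (p * (if e ∈ A then Real.exp s else 1) + (1 - p))
      = (p * Real.exp s + (1 - p)) ^ A.card := by
    have : ∀ e ∈ E, (p * (if e ∈ A then Real.exp s else 1) + (1 - p))
        = if e ∈ A then (p * Real.exp s + (1 - p)) else 1 := by
      intro e _
      split_ifs <;> ring
    rw [Finset.prod_congr rfl this, Finset.prod_ite_mem, Finset.inter_eq_right.mpr hA,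
      Finset.prod_const]
  rw [← h2, h]
  refine Finset.sum_congr rfl fun S hS => ?_
  have hSE := Finset.mem_powerset.mp hS
  rw [Finset.prod_mul_distrib, Finset.prod_const, Finset.prod_const, Finset.prod_ite_mem,
    Finset.prod_const, Finset.card_sdiff_of_subset hSE, Finset.inter_comm S A, ← Real.exp_nat_mul,
    mul_comm s]
  ring

theorem exp_quad_bound (s : ℝ) (hs : |s| ≤ 1 / 6) : Real.exp s ≤ 1 + s + 3 / 4 * s ^ 2 := by
  have h := Real.exp_bound (x := s) (by linarith) (n := 3) (by norm_num)
  have h1 := (abs_le.mp h).2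
  simp [Finset.sum_range_succ, Nat.factorial] at h1
  have h3 : |s| ^ 3 ≤ 1 / 6 * s ^ 2 := by
    have : |s| ^ 3 = |s| * s ^ 2 := by rw [← sq_abs s]; ring
    rw [this]
    exact mul_le_mul_of_nonneg_right hs (sq_nonneg s)
  nlinarith [sq_nonneg s]

/-- Centered moment generating function bound. -/
theorem mgf_bound {V : Type*} [DecidableEq V] (E A : Finset (Finset V)) (hA : A ⊆ E)
    (p s M t : ℝ) (hp0 : 0 < p) (hp1 : p < 1) (hs : |s| ≤ 1 / 6) (hM : p * A.card ≤ M) :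
    ∑ S ∈ E.powerset, p ^ S.card * (1 - p) ^ (E.card - S.card) *
      Real.exp (s * (((A ∩ S).card : ℝ) - p * A.card) - t) ≤
      Real.exp (3 / 4 * s ^ 2 * M - t) := by
  have h1 : ∀ S ∈ E.powerset, p ^ S.card * (1 - p) ^ (E.card - S.card) *
      Real.exp (s * (((A ∩ S).card : ℝ) - p * A.card) - t) =
      (p ^ S.card * (1 - p) ^ (E.card - S.card) * Real.exp (s * ((A ∩ S).card : ℝ))) *
        Real.exp (- (s * (p * A.card)) - t) := by
    intro S _
    rw [mul_assoc _ (Real.exp _) (Real.exp _), ← Real.exp_add]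
    congr 2
    ring
  rw [Finset.sum_congr rfl h1, ← Finset.sum_mul, mgf_eq E A hA]
  have h2 : p * Real.exp s + (1 - p) ≤ Real.exp (p * (s + 3 / 4 * s ^ 2)) := by
    have := exp_quad_bound s hs
    have h3 := Real.add_one_le_exp (p * (s + 3 / 4 * s ^ 2))
    nlinarith
  have h0 : 0 ≤ p * Real.exp s + (1 - p) := by
    have := Real.exp_pos s
    have := mul_pos hp0 this
    linarith
  calc (p * Real.exp s + (1 - p)) ^ A.card * Real.exp (- (s * (p * A.card)) - t)
      ≤ Real.exp (p * (s + 3 / 4 * s ^ 2)) ^ A.card * Real.exp (- (s * (p * A.card)) - t) := by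
        gcongr
    _ = Real.exp (3 / 4 * s ^ 2 * (p * A.card) - t) := by
        rw [← Real.exp_nat_mul, ← Real.exp_add]
        congr 1
        ring
    _ ≤ _ := by gcongr

set_option maxHeartbeats 1000000 in
/-- Robustness of HEDCS under edge sampling: if `H` is an
`HEDCS(G, β_H, β_H − (d−1))` with `β_H = (1 − λ/α)·β/p`,
`β ≥ 15d(αd)²·λ⁻²·log n` and `p < 1 − 2/α`, then for the edge sampled subgraph
`G_p` and `H_p = H ∩ G_p`, with probability at least `1 − 2/n^{5d−1}`:
(1) `|d_{H_p}(v) − p·d_H(v)| ≤ (λ/(αd))·β` for every vertex `v`, and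
(2) `H_p` is an `HEDCS(G_p, β, (1−λ)β)`. -/
theorem hedcs_sampling_robust {V : Type*} [Fintype V] [DecidableEq V]
    (d : ℕ) (hd : 2 ≤ d)
    (E : Finset (Finset V)) (hE : ∀ e ∈ E, e.card = d)
    (n : ℕ) (hn : n = Fintype.card V)
    (α lam p β : ℝ) (hα : 2 < α) (hlam0 : 0 < lam) (hlam1 : lam < 1)
    (hp0 : 0 < p) (hp1 : p < 1) (hpα : p < 1 - 2 / α)
    (hβ : 15 * (d : ℝ) * (α * d) ^ 2 / lam ^ 2 * Real.log n ≤ β)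
    (βH βHm : ℝ) (hβH : βH = (1 - lam / α) * β / p) (hβHm : βHm = βH - ((d : ℝ) - 1))
    (H : Finset (Finset V)) (hH : IsHEDCS E H βH βHm) :
    1 - 2 / (n : ℝ) ^ (5 * d - 1) ≤
      sampleProb E p {S |
        (∀ v : V, |((deg (H ∩ S) v : ℝ)) - p * (deg H v : ℝ)| ≤ lam / (α * d) * β) ∧
        IsHEDCS S (H ∩ S) β ((1 - lam) * β)} := by
  have hwnn : ∀ S : Finset (Finset V), 0 ≤ p ^ S.card * (1 - p) ^ (E.card - S.card) := by
    intro S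
    have : 0 ≤ 1 - p := by linarith
    positivity
  have hw1 : ∑ S ∈ E.powerset, p ^ S.card * (1 - p) ^ (E.card - S.card) = 1 := by
    rw [Finset.sum_pow_mul_eq_add_pow]
    simp
  obtain ⟨hHE, hHup, hHlow⟩ := hH
  have hdR : (2 : ℝ) ≤ d := by exact_mod_cast hd
  rcases Nat.lt_or_ge n 2 with hn2 | hn2
  · rcases Nat.eq_zero_or_pos n with h0 | h0
    · -- empty vertex set
      have hV : IsEmpty V := Fintype.card_eq_zero_iff.mp (by omega)
      have hE0 : E = ∅ := by
        refine Finset.eq_empty_of_forall_notMem fun e he => ?_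
        have h1 := hE e he
        have h2 : e = ∅ := Finset.eq_empty_of_isEmpty e
        rw [h2] at h1
        simp at h1
        omega
      subst hE0
      have hH0 : H = ∅ := Finset.subset_empty.mp hHE
      subst hH0
      have hz : (n : ℝ) ^ (5 * d - 1) = 0 := by
        rw [h0]
        simp
        omega
      rw [hz, sampleProb, Finset.powerset_empty, Finset.sum_singleton, Set.indicator_of_mem]
      · simp
      · refine ⟨fun v => hV.elim v, ?_, ?_, ?_⟩ <;> simp
    · have h1 : n = 1 := by omega
      have h2 : 0 ≤ sampleProb E p {S |
          (∀ v : V, |((deg (H ∩ S) v : ℝ)) - p * (deg H v : ℝ)| ≤ lam / (α * d) * β) ∧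
          IsHEDCS S (H ∩ S) β ((1 - lam) * β)} :=
        Finset.sum_nonneg fun S _ => Set.indicator_nonneg (fun S _ => hwnn S) S
      refine le_trans ?_ h2
      rw [h1]
      norm_num
  -- main case
  have hnR : (2 : ℝ) ≤ n := by exact_mod_cast hn2
  have hn0 : (0 : ℝ) < n := by linarith
  have hlog : 1 / 2 < Real.log n := by
    have h1 := Real.log_two_gt_d9
    have h2 := Real.log_le_log (by norm_num) hnR
    linarith
  have hα0 : 0 < α := by linarith
  have hd0 : (0 : ℝ) < d := by linarith
  have had : 4 ≤ α * d := by nlinarith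
  have hβ0' : 15 * (d : ℝ) * (α * d) ^ 2 * Real.log n ≤ β * lam ^ 2 := by
    have h1 := mul_le_mul_of_nonneg_right hβ (sq_nonneg lam)
    have h2 : 15 * (d : ℝ) * (α * d) ^ 2 / lam ^ 2 * Real.log n * lam ^ 2 =
        15 * (d : ℝ) * (α * d) ^ 2 * Real.log n := by
      field_simp
    linarith
  have hsq : (16 : ℝ) ≤ (α * d) ^ 2 := by nlinarith
  have hbig : (d : ℝ) ≤ β * lam ^ 2 := by
    have h1 : (d : ℝ) * 16 ≤ d * (α * d) ^ 2 := mul_le_mul_of_nonneg_left hsq hd0.le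
    have h2 : (d : ℝ) * (α * d) ^ 2 * (1 / 2) ≤ d * (α * d) ^ 2 * Real.log n :=
      mul_le_mul_of_nonneg_left hlog.le (by positivity)
    linarith
  have hβ0 : 0 < β := by
    by_contra hcon
    have : β * lam ^ 2 ≤ 0 := mul_nonpos_of_nonpos_of_nonneg (by linarith) (sq_nonneg _)
    linarith
  have hlamβ : (d : ℝ) ≤ lam * β := by
    have : β * lam ^ 2 ≤ lam * β := by
      have : lam ^ 2 ≤ lam := by nlinarith
      nlinarith
    linarith
  set t : ℝ := lam / (α * d) * β with ht
  have hdt : (d : ℝ) * t = lam / α * β := by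
    rw [ht]
    field_simp
  set r : ℝ := lam / (α * d) with hr
  have hr0 : 0 < r := by positivity
  have hr4 : r ≤ 1 / 4 := by
    rw [hr, div_le_iff₀ (by linarith)]
    linarith
  have hla1 : lam / α < 1 := by
    rw [div_lt_one hα0]
    linarith
  have hla0 : 0 < lam / α := by positivity
  have hpβH : p * βH = (1 - lam / α) * β := by
    rw [hβH]
    field_simp
  -- degree bound
  have hdeg : ∀ v : V, p * ((H.filter (fun e => v ∈ e)).card : ℝ) ≤ β := by
    intro v
    rcases (H.filter (fun e => v ∈ e)).eq_empty_or_nonempty with h | ⟨e, he⟩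
    · rw [h]
      simpa using hβ0.le
    · obtain ⟨he1, he2⟩ := Finset.mem_filter.mp he
      have h1 : (deg H v : ℝ) ≤ ∑ v ∈ e, (deg H v : ℝ) :=
        Finset.single_le_sum (f := fun v => (deg H v : ℝ)) (fun _ _ => Nat.cast_nonneg _) he2
      have h2 : p * (deg H v : ℝ) ≤ p * βH :=
        mul_le_mul_of_nonneg_left (h1.trans (hHup e he1)) hp0.le
      rw [hpβH] at h2
      have h3 : (1 - lam / α) * β ≤ β := by nlinarith
      exact h2.trans h3
  -- (1) implies (2)
  have himp : ∀ S ∈ E.powerset, (∀ v : V, |((deg (H ∩ S) v : ℝ)) - p * (deg H v : ℝ)| ≤ t) →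
      IsHEDCS S (H ∩ S) β ((1 - lam) * β) := by
    intro S hS hv
    have hSE := Finset.mem_powerset.mp hS
    refine ⟨Finset.inter_subset_right, ?_, ?_⟩
    · intro e he
      have heH := (Finset.mem_inter.mp he).1
      have h1 : ∑ v ∈ e, (deg (H ∩ S) v : ℝ) ≤ ∑ v ∈ e, (p * (deg H v : ℝ) + t) :=
        Finset.sum_le_sum fun v _ => by linarith [(abs_le.mp (hv v)).2]
      rw [Finset.sum_add_distrib, ← Finset.mul_sum, Finset.sum_const, hE e (hHE heH),
        nsmul_eq_mul, hdt] at h1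
      have h2 := mul_le_mul_of_nonneg_left (hHup e heH) hp0.le
      linarith
    · intro e heS heH
      have heH' : e ∉ H := fun h => heH (Finset.mem_inter.mpr ⟨h, heS⟩)
      have h1 : ∑ v ∈ e, (p * (deg H v : ℝ) - t) ≤ ∑ v ∈ e, (deg (H ∩ S) v : ℝ) :=
        Finset.sum_le_sum fun v _ => by linarith [(abs_le.mp (hv v)).1]
      rw [Finset.sum_sub_distrib, ← Finset.mul_sum, Finset.sum_const, hE e (hSE heS),
        nsmul_eq_mul, hdt] at h1
      have h2 := mul_le_mul_of_nonneg_left (hHlow e (hSE heS) heH') hp0.le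
      rw [hβHm, mul_sub, hpβH] at h2
      have h3 : p * ((d : ℝ) - 1) ≤ (1 - 2 / α) * (lam * β) :=
        mul_le_mul hpα.le (by linarith) (by linarith) (by linarith)
      have h4 : (1 - 2 / α) * (lam * β) = lam * β - 2 * (lam / α * β) := by
        field_simp
      linarith
  -- union bound
  set s : ℝ := 2 / 3 * r with hs
  have hs0 : 0 < s := by positivity
  have hsle : |s| ≤ 1 / 6 := by
    rw [abs_of_pos hs0]
    linarith
  have hsle' : |(-s)| ≤ 1 / 6 := by rwa [abs_neg]
  have hexp : Real.exp (3 / 4 * s ^ 2 * β - s * t) ≤ ((n : ℝ) ^ (5 * d))⁻¹ := by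
    have h1 : 3 / 4 * s ^ 2 * β - s * t = - (r ^ 2 * β / 3) := by
      rw [hs, ht]
      ring
    have h2 : 15 * (d : ℝ) * Real.log n ≤ r ^ 2 * β := by
      have : r ^ 2 * β = β * lam ^ 2 / (α * d) ^ 2 := by
        rw [hr, div_pow]
        ring
      rw [this, le_div_iff₀ (by positivity)]
      linarith
    have h3 : ((n : ℝ) ^ (5 * d))⁻¹ = Real.exp (-(((5 * d : ℕ) : ℝ) * Real.log n)) := by
      rw [Real.exp_neg, Real.exp_nat_mul, Real.exp_log hn0]
    rw [h1, h3]
    apply Real.exp_le_exp.mpr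
    push_cast
    linarith
  have hX : ∀ (S : Finset (Finset V)) (v : V),
      deg (H ∩ S) v = ((H.filter (fun e => v ∈ e)) ∩ S).card := by
    intro S v
    rw [deg, Finset.filter_inter]
  have key : ∀ S ∈ E.powerset, p ^ S.card * (1 - p) ^ (E.card - S.card) -
      Set.indicator {S |
        (∀ v : V, |((deg (H ∩ S) v : ℝ)) - p * (deg H v : ℝ)| ≤ t) ∧
        IsHEDCS S (H ∩ S) β ((1 - lam) * β)}
        (fun S => p ^ S.card * (1 - p) ^ (E.card - S.card)) S ≤
      ∑ v : V, (p ^ S.card * (1 - p) ^ (E.card - S.card) *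
        Real.exp (s * ((((H.filter (fun e => v ∈ e)) ∩ S).card : ℝ)
          - p * (H.filter (fun e => v ∈ e)).card) - s * t) +
        p ^ S.card * (1 - p) ^ (E.card - S.card) *
        Real.exp (-s * ((((H.filter (fun e => v ∈ e)) ∩ S).card : ℝ)
          - p * (H.filter (fun e => v ∈ e)).card) - s * t)) := by
    intro S hS
    have hw := hwnn S
    by_cases hv : ∀ v : V, |((deg (H ∩ S) v : ℝ)) - p * (deg H v : ℝ)| ≤ t
    · rw [Set.indicator_of_mem (by exact ⟨hv, himp S hS hv⟩), sub_self]
      exact Finset.sum_nonneg fun v _ => by positivity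
    · rw [Set.indicator_of_notMem (fun h => hv h.1), sub_zero]
      push Not at hv
      obtain ⟨v, hv⟩ := hv
      refine le_trans ?_ (Finset.single_le_sum (fun v _ => by positivity) (Finset.mem_univ v))
      rw [hX S v, deg] at hv
      generalize ((((H.filter (fun e => v ∈ e)) ∩ S).card : ℝ)
          - p * (H.filter (fun e => v ∈ e)).card) = y at hv ⊢
      rw [← mul_add]
      refine le_mul_of_one_le_right hw ?_
      rcases lt_abs.mp hv with h | h
      · have h1 : 1 ≤ Real.exp (s * y - s * t) := Real.one_le_exp (by linarith [mul_lt_mul_of_pos_left h hs0])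
        have h2 := Real.exp_pos (-s * y - s * t)
        linarith
      · have h1 : 1 ≤ Real.exp (-s * y - s * t) := Real.one_le_exp (by linarith [mul_lt_mul_of_pos_left h hs0])
        have h2 := Real.exp_pos (s * y - s * t)
        linarith
  have hsum := Finset.sum_le_sum key
  rw [Finset.sum_sub_distrib, hw1, Finset.sum_comm] at hsum
  have hfin : ∀ v ∈ (Finset.univ : Finset V), ∑ S ∈ E.powerset,
      (p ^ S.card * (1 - p) ^ (E.card - S.card) *
        Real.exp (s * ((((H.filter (fun e => v ∈ e)) ∩ S).card : ℝ)
          - p * (H.filter (fun e => v ∈ e)).card) - s * t) +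
        p ^ S.card * (1 - p) ^ (E.card - S.card) *
        Real.exp (-s * ((((H.filter (fun e => v ∈ e)) ∩ S).card : ℝ)
          - p * (H.filter (fun e => v ∈ e)).card) - s * t)) ≤ 2 * ((n : ℝ) ^ (5 * d))⁻¹ := by
    intro v _
    have hA : H.filter (fun e => v ∈ e) ⊆ E := (Finset.filter_subset _ _).trans hHE
    have h1 := mgf_bound E _ hA p s β (s * t) hp0 hp1 hsle (hdeg v)
    have h2 := mgf_bound E _ hA p (-s) β (s * t) hp0 hp1 hsle' (hdeg v)
    rw [neg_sq] at h2
    rw [Finset.sum_add_distrib]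
    linarith
  have hsum2 := hsum.trans (Finset.sum_le_sum hfin)
  rw [Finset.sum_const, Finset.card_univ, ← hn, nsmul_eq_mul] at hsum2
  have hpow : (n : ℝ) * (2 * ((n : ℝ) ^ (5 * d))⁻¹) = 2 / (n : ℝ) ^ (5 * d - 1) := by
    obtain ⟨k, hk⟩ : ∃ k, 5 * d = k + 1 := ⟨5 * d - 1, by omega⟩
    rw [hk, Nat.add_sub_cancel, pow_succ]
    field_simp
  rw [hpow] at hsum2
  unfold sampleProb
  linarith
end

section
/- There is an absolute constant C > 0 with the following property. Let G = (V, E) be a d-uniform hypergraph on n vertices with d ≥ 2, let p ∈ (0, 1) and 0 < λ < 1, and suppose there exists a real α > 2/(1−p) such that β ≥ 15d(αd)²·λ^{−2}·log n. Let (G₁, G₂) be a pair of random subgraphs of G, defined on a common probability space with arbitrary joint distribution, such that marginally each G_i is an edge sampled subgraph of G with probability p. Let f₁, f₂ be arbitrary functions assigning to each possible subgraph of G an HEDCS of it with parameters (β, (1−λ)β), and set H₁ = f₁(G₁), H₂ = f₂(G₂). Then with probability at least 1 − 4/n^{5d−1}, simultaneously for every vertex v ∈ V, |d_{H₁}(v)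 − d_{H₂}(v)| ≤ C·n^{1/2}·λ^{1/2}·β. -/
open Finset

namespace HedcsAux

/-- Degree sum of a profile over an edge. -/
noncomputable def es {V : Type} (x : V → ℕ) (e : Finset V) : ℝ := ∑ v ∈ e, (x v : ℝ)

open Classical in
/-- The weight of an edge relative to two degree profiles. -/
noncomputable def wt {V : Type} (lam β : ℝ) (x y : V → ℕ) (e : Finset V) : ℝ :=
  if es y e < (1 - lam) * β ∧ es x e ≤ β ∧ es y e < es x e then es x e - es y e else 0

lemma es_nonneg {V : Type} (x : V → ℕ) (e : Finset V) : 0 ≤ es x e :=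
  Finset.sum_nonneg (fun _ _ => Nat.cast_nonneg _)

lemma wt_nonneg {V : Type} (lam β : ℝ) (x y : V → ℕ) (e : Finset V) : 0 ≤ wt lam β x y e := by
  unfold wt; split_ifs with h
  · linarith [h.2.2]
  · exact le_rfl

lemma wt_le {V : Type} (lam β : ℝ) (hβ : 0 ≤ β) (x y : V → ℕ) (e : Finset V) :
    wt lam β x y e ≤ β := by
  unfold wt; split_ifs with h
  · linarith [h.2.1, es_nonneg y e]
  · exact hβ

lemma edge_bound {V : Type} (lam β : ℝ) (hl : 0 < lam) (hβ : 0 ≤ β) (x y : V → ℕ) (e : Finset V)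
    (h : es x e ≤ β) :
    es x e - es y e ≤ wt lam β x y e - wt lam β y x e + lam * β := by
  have : 0 ≤ lam * β := by positivity
  unfold wt
  split_ifs with h1 h2 h2
  · linarith [h1.2.2, h2.2.2]
  · linarith
  · linarith
  · by_cases h3 : es y e < es x e
    · have : ¬ es y e < (1 - lam) * β := fun h4 => h1 ⟨h4, h, h3⟩
      linarith
    · linarith

lemma sum_deg {V : Type} [Fintype V] [DecidableEq V] (H : Finset (Finset V)) (D : V → ℝ) :
    ∑ v, (deg H v : ℝ) * D v = ∑ e ∈ H, ∑ v ∈ e, D v := by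
  have : ∀ e ∈ H, ∑ v ∈ e, D v = ∑ v, if v ∈ e then D v else 0 := by
    intro e _; simp
  rw [Finset.sum_congr rfl this, Finset.sum_comm]
  refine Finset.sum_congr rfl fun v _ => ?_
  rw [← Finset.sum_filter]; simp [deg]

lemma card_le {V : Type} [Fintype V] [DecidableEq V] (d : ℕ) (hd : 2 ≤ d) (E H : Finset (Finset V))
    (hE : ∀ e ∈ E, e.card = d) (β βm : ℝ) (hβ : 0 ≤ β) (h : IsHEDCS E H β βm) :
    (H.card : ℝ) ≤ Fintype.card V * β := by
  have h1 := sum_deg H (fun _ => (1 : ℝ))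
  have h2 : ∑ e ∈ H, ∑ v ∈ e, (1 : ℝ) = H.card * d := by
    rw [Finset.sum_congr rfl (g := fun _ => (d : ℝ))]
    · simp
    · intro e he; simp [hE e (h.1 he)]
  have h3 : ∑ v, (deg H v : ℝ) * 1 ≤ ∑ v : V, β := by
    refine Finset.sum_le_sum fun v _ => ?_
    rw [mul_one]
    by_cases hv : ∃ e ∈ H, v ∈ e
    · obtain ⟨e, he, hve⟩ := hv
      exact (Finset.single_le_sum (f := fun u => (deg H u : ℝ))
        (fun _ _ => Nat.cast_nonneg _) hve).trans (h.2.1 e he)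
    · push Not at hv
      have : deg H v = 0 := by
        simp [deg, Finset.filter_eq_empty_iff]; exact hv
      simpa [this] using hβ
  rw [h1, h2] at h3
  have hd' : (1 : ℝ) ≤ d := by exact_mod_cast (by omega : 1 ≤ d)
  have := mul_le_mul_of_nonneg_left hd' (Nat.cast_nonneg (α := ℝ) H.card)
  simp at h3
  linarith

lemma determ {V : Type} [Fintype V] [DecidableEq V] (d : ℕ) (hd : 2 ≤ d)
    (G₁ G₂ H₁ H₂ : Finset (Finset V))
    (hG₁ : ∀ e ∈ G₁, e.card = d) (hG₂ : ∀ e ∈ G₂, e.card = d) (lam β μ ν : ℝ)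
    (hl : 0 < lam) (hl1 : lam < 1)
    (hβ : 0 ≤ β) (h₁ : IsHEDCS G₁ H₁ β ((1 - lam) * β)) (h₂ : IsHEDCS G₂ H₂ β ((1 - lam) * β))
    (hU1 : ∑ e ∈ G₁, wt lam β (deg H₁) (deg H₂) e
      ≤ (1 + lam / 2) * μ + lam * (Fintype.card V * β ^ 2) / 2)
    (hL2 : (1 - lam / 2) * μ - lam * (Fintype.card V * β ^ 2) / 2
      ≤ ∑ e ∈ G₂, wt lam β (deg H₁) (deg H₂) e)
    (hU2 : ∑ e ∈ G₂, wt lam β (deg H₂) (deg H₁) e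
      ≤ (1 + lam / 2) * ν + lam * (Fintype.card V * β ^ 2) / 2)
    (hL1 : (1 - lam / 2) * ν - lam * (Fintype.card V * β ^ 2) / 2
      ≤ ∑ e ∈ G₁, wt lam β (deg H₂) (deg H₁) e)
    (v : V) :
    |(deg H₁ v : ℝ) - deg H₂ v| ≤ 4 * √(Fintype.card V) * √lam * β := by
  set n : ℝ := ((Fintype.card V : ℕ) : ℝ) with hn
  have hn0 : 0 ≤ n := Nat.cast_nonneg _
  have key : ∀ (G H : Finset (Finset V)) (x : V → ℕ), (∀ e ∈ G, e.card = d) →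
      IsHEDCS G H β ((1 - lam) * β) →
      ∑ e ∈ G, wt lam β x (deg H) e = ∑ e ∈ H, wt lam β x (deg H) e := by
    intro G H x _ h
    symm
    refine Finset.sum_subset h.1 fun e he heH => ?_
    have := h.2.2 e he heH
    unfold wt
    rw [if_neg]
    rintro ⟨h3, _⟩
    exact absurd h3 (not_lt.mpr this)
  have c1 := card_le d hd G₁ H₁ hG₁ β _ hβ h₁
  have c2 := card_le d hd G₂ H₂ hG₂ β _ hβ h₂
  have sub1 : ∑ e ∈ H₁, wt lam β (deg H₁) (deg H₂) e ≤ ∑ e ∈ G₁, wt lam β (deg H₁) (deg H₂) e :=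
    Finset.sum_le_sum_of_subset_of_nonneg h₁.1 (fun _ _ _ => wt_nonneg _ _ _ _ _)
  have sub2 : ∑ e ∈ H₂, wt lam β (deg H₂) (deg H₁) e ≤ ∑ e ∈ G₂, wt lam β (deg H₂) (deg H₁) e :=
    Finset.sum_le_sum_of_subset_of_nonneg h₂.1 (fun _ _ _ => wt_nonneg _ _ _ _ _)
  have k1 := key G₁ H₁ (deg H₂) hG₁ h₁
  have k2 := key G₂ H₂ (deg H₁) hG₂ h₂
  have b1 : ∑ e ∈ H₁, wt lam β (deg H₂) (deg H₁) e ≤ n * β ^ 2 := by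
    calc _ ≤ ∑ e ∈ H₁, β := Finset.sum_le_sum fun e _ => wt_le _ _ hβ _ _ _
      _ = H₁.card * β := by simp
      _ ≤ n * β * β := mul_le_mul_of_nonneg_right c1 hβ
      _ = _ := by ring
  have b2 : ∑ e ∈ H₂, wt lam β (deg H₁) (deg H₂) e ≤ n * β ^ 2 := by
    calc _ ≤ ∑ e ∈ H₂, β := Finset.sum_le_sum fun e _ => wt_le _ _ hβ _ _ _
      _ = H₂.card * β := by simp
      _ ≤ n * β * β := mul_le_mul_of_nonneg_right c2 hβ
      _ = _ := by ring
  have e1 : ∑ e ∈ H₁, (es (deg H₁) e - es (deg H₂) e) ≤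
      ∑ e ∈ H₁, (wt lam β (deg H₁) (deg H₂) e - wt lam β (deg H₂) (deg H₁) e + lam * β) :=
    Finset.sum_le_sum fun e he => edge_bound lam β hl hβ _ _ e (h₁.2.1 e he)
  have e2 : ∑ e ∈ H₂, (es (deg H₂) e - es (deg H₁) e) ≤
      ∑ e ∈ H₂, (wt lam β (deg H₂) (deg H₁) e - wt lam β (deg H₁) (deg H₂) e + lam * β) :=
    Finset.sum_le_sum fun e he => edge_bound lam β hl hβ _ _ e (h₂.2.1 e he)
  simp only [Finset.sum_add_distrib, Finset.sum_sub_distrib, Finset.sum_const, nsmul_eq_mul]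
    at e1 e2
  have main : ∑ u, ((deg H₁ u : ℝ) - deg H₂ u) ^ 2 =
      (∑ e ∈ H₁, es (deg H₁) e - ∑ e ∈ H₁, es (deg H₂) e)
      + (∑ e ∈ H₂, es (deg H₂) e - ∑ e ∈ H₂, es (deg H₁) e) := by
    simp only [es]
    rw [← sum_deg, ← sum_deg, ← sum_deg, ← sum_deg, ← Finset.sum_sub_distrib,
      ← Finset.sum_sub_distrib, ← Finset.sum_add_distrib]
    refine Finset.sum_congr rfl fun u _ => by ring
  have hT : 0 ≤ n * β ^ 2 := by positivity
  have aux : ∀ μ A B : ℝ, A ≤ (1 + lam / 2) * μ + lam * (n * β ^ 2) / 2 →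
      (1 - lam / 2) * μ - lam * (n * β ^ 2) / 2 ≤ B → B ≤ n * β ^ 2 →
      A - B ≤ 4 * lam * (n * β ^ 2) := by
    intro μ A B hA hB hB'
    have hμ : μ ≤ 3 * (n * β ^ 2) := by
      by_contra hc
      push Not at hc
      nlinarith
    nlinarith
  have f1 := aux μ _ _ hU1 hL2 (k2 ▸ b2)
  have f2 := aux ν _ _ hU2 hL1 (k1 ▸ b1)
  have g1 : (H₁.card : ℝ) * (lam * β) ≤ lam * (n * β ^ 2) := by
    have := mul_le_mul_of_nonneg_right c1 (by positivity : 0 ≤ lam * β)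
    nlinarith
  have g2 : (H₂.card : ℝ) * (lam * β) ≤ lam * (n * β ^ 2) := by
    have := mul_le_mul_of_nonneg_right c2 (by positivity : 0 ≤ lam * β)
    nlinarith
  have tot : ∑ u, ((deg H₁ u : ℝ) - deg H₂ u) ^ 2 ≤ 10 * lam * (n * β ^ 2) := by
    rw [main]; linarith
  have single : ((deg H₁ v : ℝ) - deg H₂ v) ^ 2 ≤ 10 * lam * (n * β ^ 2) :=
    (Finset.single_le_sum (f := fun u => ((deg H₁ u : ℝ) - deg H₂ u) ^ 2)
      (fun _ _ => sq_nonneg _) (Finset.mem_univ v)).trans tot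
  apply abs_le_of_sq_le_sq _ (by positivity)
  have : (4 * √n * √lam * β) ^ 2 = 16 * lam * (n * β ^ 2) := by
    rw [mul_pow, mul_pow, mul_pow, Real.sq_sqrt hn0, Real.sq_sqrt hl.le]; ring
  rw [this]
  have : 0 ≤ lam * (n * β ^ 2) := by positivity
  linarith

section Prob
variable {V Ω : Type} [DecidableEq V] [Fintype Ω]

lemma total_one (E : Finset (Finset V)) (p : ℝ) :
    ∑ S ∈ E.powerset, p ^ S.card * (1 - p) ^ (E.card - S.card) = 1 := by
  rw [Finset.sum_pow_mul_eq_add_pow]; simp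

lemma supp (E : Finset (Finset V)) (p : ℝ) (w : Ω → ℝ) (g : Ω → Finset (Finset V))
    (hw : ∀ ω, 0 ≤ w ω) (hw1 : ∑ ω, w ω = 1)
    (hg : ∀ S ∈ E.powerset, ∑ ω ∈ Finset.univ.filter (fun ω => g ω = S), w ω
            = p ^ S.card * (1 - p) ^ (E.card - S.card)) (ω : Ω) (h : ¬ g ω ⊆ E) : w ω = 0 := by
  have h1 : ∑ ω ∈ Finset.univ.filter (fun ω => g ω ∈ E.powerset), w ω = 1 := by
    rw [← total_one E p, ← Finset.sum_congr rfl hg, ← Finset.sum_fiberwise_of_maps_to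
      (s := Finset.univ.filter (fun ω => g ω ∈ E.powerset)) (t := E.powerset) (g := g)
      (by intro x hx; exact (Finset.mem_filter.mp hx).2)]
    refine Finset.sum_congr rfl fun S hS => ?_
    rw [Finset.filter_filter]
    refine Finset.sum_congr ?_ fun _ _ => rfl
    ext x; simp only [Finset.mem_filter, Finset.mem_univ, true_and]
    exact ⟨fun h => h.2, fun h => ⟨h ▸ hS, h⟩⟩
  have h2 := Finset.sum_filter_add_sum_filter_not Finset.univ (fun ω => g ω ∈ E.powerset) w
  rw [h1, hw1] at h2
  have h3 : ∑ ω ∈ Finset.univ.filter (fun ω => ¬ g ω ∈ E.powerset), w ω = 0 := by linarith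
  rw [Finset.sum_eq_zero_iff_of_nonneg (fun _ _ => hw _)] at h3
  exact h3 ω (by simpa using h)

lemma expect (E : Finset (Finset V)) (p : ℝ) (w : Ω → ℝ) (g : Ω → Finset (Finset V))
    (hw : ∀ ω, 0 ≤ w ω) (hw1 : ∑ ω, w ω = 1)
    (hg : ∀ S ∈ E.powerset, ∑ ω ∈ Finset.univ.filter (fun ω => g ω = S), w ω
            = p ^ S.card * (1 - p) ^ (E.card - S.card)) (φ : Finset (Finset V) → ℝ) :
    ∑ ω, w ω * φ (g ω) = ∑ S ∈ E.powerset, p ^ S.card * (1 - p) ^ (E.card - S.card) * φ S := by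
  have h1 : ∑ ω, w ω * φ (g ω) =
      ∑ ω ∈ Finset.univ.filter (fun ω => g ω ∈ E.powerset), w ω * φ (g ω) := by
    symm
    refine Finset.sum_subset (Finset.subset_univ _) fun ω _ h => ?_
    rw [supp E p w g hw hw1 hg ω (by simpa using h), zero_mul]
  rw [h1, ← Finset.sum_fiberwise_of_maps_to
      (s := Finset.univ.filter (fun ω => g ω ∈ E.powerset)) (t := E.powerset) (g := g)
      (by intro x hx; exact (Finset.mem_filter.mp hx).2)]
  refine Finset.sum_congr rfl fun S hS => ?_
  rw [← hg S hS, Finset.sum_mul, Finset.filter_filter]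
  refine Finset.sum_congr ?_ ?_
  · ext x; simp only [Finset.mem_filter, Finset.mem_univ, true_and]
    exact ⟨fun h => h.2, fun h => ⟨h ▸ hS, h⟩⟩
  · intro x hx; rw [(Finset.mem_filter.mp hx).2]

lemma mgf (E : Finset (Finset V)) (p : ℝ) (hp : 0 < p) (hp1 : p < 1) (w : Ω → ℝ)
    (g : Ω → Finset (Finset V))
    (hw : ∀ ω, 0 ≤ w ω) (hw1 : ∑ ω, w ω = 1)
    (hg : ∀ S ∈ E.powerset, ∑ ω ∈ Finset.univ.filter (fun ω => g ω = S), w ω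
            = p ^ S.card * (1 - p) ^ (E.card - S.card)) (b : Finset V → ℝ)
    (hb : ∀ e, |b e| ≤ 1) :
    ∑ ω, w ω * Real.exp (∑ e ∈ g ω, b e) ≤ Real.exp (∑ e ∈ E, p * (b e + b e ^ 2)) := by
  rw [expect E p w g hw hw1 hg (fun S => Real.exp (∑ e ∈ S, b e))]
  have : ∑ S ∈ E.powerset, p ^ S.card * (1 - p) ^ (E.card - S.card) * Real.exp (∑ e ∈ S, b e)
      = ∏ e ∈ E, (p * Real.exp (b e) + (1 - p)) := by
    rw [Finset.prod_add]
    refine Finset.sum_congr rfl fun S hS => ?_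
    rw [Finset.prod_mul_distrib, Finset.prod_const, Finset.prod_const, Real.exp_sum,
      Finset.card_sdiff_of_subset (Finset.mem_powerset.mp hS)]
    ring
  rw [this, Real.exp_sum]
  refine Finset.prod_le_prod (fun e _ => ?_) fun e _ => ?_
  · have := Real.exp_pos (b e)
    have : 0 < 1 - p := by linarith
    positivity
  · have h1 := Real.add_one_le_exp (p * (b e + b e ^ 2))
    have h2 := (abs_le.mp (Real.abs_exp_sub_one_sub_id_le (hb e))).2
    nlinarith

/-- Total exponential-moment penalty. -/
noncomputable def pen (E : Finset (Finset V)) (p lam β R : ℝ)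
    (P : Finset ((V → ℕ) × (V → ℕ))) (S : Finset (Finset V)) : ℝ :=
  ∑ q ∈ P,
    (Real.exp (∑ e ∈ S, lam / (2 * β) * wt lam β q.1 q.2 e)
      * Real.exp (-(lam / (2 * β) * ((1 + lam / 2) * (p * ∑ e ∈ E, wt lam β q.1 q.2 e)) + R))
    + Real.exp (∑ e ∈ S, -(lam / (2 * β) * wt lam β q.1 q.2 e))
      * Real.exp (lam / (2 * β) * ((1 - lam / 2) * (p * ∑ e ∈ E, wt lam β q.1 q.2 e)) - R))

lemma pen_nonneg (E : Finset (Finset V)) (p lam β R : ℝ)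
    (P : Finset ((V → ℕ) × (V → ℕ))) (S : Finset (Finset V)) : 0 ≤ pen E p lam β R P S :=
  Finset.sum_nonneg fun _ _ => by positivity

lemma expect_pen (E : Finset (Finset V)) (p : ℝ) (hp : 0 < p) (hp1 : p < 1) (w : Ω → ℝ)
    (g : Ω → Finset (Finset V))
    (hw : ∀ ω, 0 ≤ w ω) (hw1 : ∑ ω, w ω = 1)
    (hg : ∀ S ∈ E.powerset, ∑ ω ∈ Finset.univ.filter (fun ω => g ω = S), w ω
            = p ^ S.card * (1 - p) ^ (E.card - S.card)) (lam β R : ℝ) (hl : 0 < lam) (hl1 : lam < 1)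
    (hβ : 0 < β) (P : Finset ((V → ℕ) × (V → ℕ))) :
    ∑ ω, w ω * pen E p lam β R P (g ω) ≤ P.card * (2 * Real.exp (-R)) := by
  unfold pen
  simp only [Finset.mul_sum]
  rw [Finset.sum_comm]
  rw [← nsmul_eq_mul]
  refine Finset.sum_le_card_nsmul _ _ _ fun q _ => ?_
  simp only [← Finset.mul_sum]
  set a := wt lam β q.1 q.2 with ha
  set s := lam / (2 * β) with hs
  have hs0 : 0 < s := by positivity
  have hsβ : s * β = lam / 2 := by rw [hs]; field_simp
  have a0 : ∀ e, 0 ≤ a e := fun e => wt_nonneg _ _ _ _ _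
  have a1 : ∀ e, a e ≤ β := fun e => wt_le _ _ hβ.le _ _ _
  have sa0 : ∀ e, 0 ≤ s * a e := fun e => mul_nonneg hs0.le (a0 e)
  have sa1 : ∀ e, s * a e ≤ lam / 2 := fun e => by
    rw [← hsβ]; exact mul_le_mul_of_nonneg_left (a1 e) hs0.le
  have m1 := mgf E p hp hp1 w g hw hw1 hg (fun e => s * a e)
    (fun e => by rw [abs_of_nonneg (sa0 e)]; linarith [sa1 e])
  have m2 := mgf E p hp hp1 w g hw hw1 hg (fun e => -(s * a e))
    (fun e => by rw [abs_neg, abs_of_nonneg (sa0 e)]; linarith [sa1 e])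
  have sq : ∀ e, (s * a e) ^ 2 ≤ lam / 2 * (s * a e) := fun e => by
    rw [pow_two]; exact mul_le_mul_of_nonneg_right (sa1 e) (sa0 e)
  have u1 : ∑ e ∈ E, p * (s * a e + (s * a e) ^ 2) ≤ s * ((1 + lam / 2) * (p * ∑ e ∈ E, a e)) := by
    simp only [Finset.mul_sum]
    refine Finset.sum_le_sum fun e _ => ?_
    have := mul_le_mul_of_nonneg_left (sq e) hp.le
    linarith
  have u2 : ∑ e ∈ E, p * (-(s * a e) + (-(s * a e)) ^ 2)
      ≤ -(s * ((1 - lam / 2) * (p * ∑ e ∈ E, a e))) := by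
    simp only [Finset.mul_sum, ← Finset.sum_neg_distrib]
    refine Finset.sum_le_sum fun e _ => ?_
    have := mul_le_mul_of_nonneg_left (sq e) hp.le
    rw [neg_sq]
    linarith
  have v1 := m1.trans (Real.exp_le_exp.mpr u1)
  have v2 := m2.trans (Real.exp_le_exp.mpr u2)
  simp only [mul_add, Finset.sum_add_distrib, ← mul_assoc]
  rw [← Finset.sum_mul, ← Finset.sum_mul, two_mul]
  simp only [mul_assoc] at v1 v2 ⊢
  refine add_le_add ?_ ?_
  · refine (mul_le_mul_of_nonneg_right (by simpa [Finset.mul_sum, mul_assoc] using v1) (Real.exp_pos _).le).trans ?_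
    rw [← Real.exp_add]
    apply Real.exp_le_exp.mpr
    simp only [Finset.mul_sum]
    apply le_of_eq
    ring
  · refine (mul_le_mul_of_nonneg_right (by simpa [Finset.mul_sum, mul_assoc] using v2) (Real.exp_pos _).le).trans ?_
    rw [← Real.exp_add]
    apply Real.exp_le_exp.mpr
    simp only [Finset.mul_sum]
    apply le_of_eq
    ring

lemma of_pen (E : Finset (Finset V)) (p lam β T : ℝ) (hl : 0 < lam)
    (hβ : 0 < β) (P : Finset ((V → ℕ) × (V → ℕ))) (S : Finset (Finset V))
    (h : pen E p lam β (lam / (2 * β) * (lam * T / 2)) P S < 1) (q : (V → ℕ) × (V → ℕ)) (hq : q ∈ P) :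
    ∑ e ∈ S, wt lam β q.1 q.2 e ≤ (1 + lam / 2) * (p * ∑ e ∈ E, wt lam β q.1 q.2 e) + lam * T / 2 ∧
    (1 - lam / 2) * (p * ∑ e ∈ E, wt lam β q.1 q.2 e) - lam * T / 2
      ≤ ∑ e ∈ S, wt lam β q.1 q.2 e := by
  have hs0 : 0 < lam / (2 * β) := by positivity
  have h1 := (Finset.single_le_sum (fun _ _ => by positivity) hq).trans_lt h
  simp only [← Real.exp_add, Finset.sum_neg_distrib, ← Finset.mul_sum] at h1
  constructor
  · have h2 := (lt_add_of_pos_right _ (Real.exp_pos _)).trans h1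
    rw [Real.exp_lt_one_iff] at h2
    refine le_of_mul_le_mul_left ?_ hs0
    linarith
  · have h2 := (lt_add_of_pos_left _ (Real.exp_pos _)).trans h1
    rw [Real.exp_lt_one_iff] at h2
    refine le_of_mul_le_mul_left ?_ hs0
    linarith

end Prob

lemma count (n d m : ℕ) (hn : 2 ≤ n) (hd : 2 ≤ d) (hm : m ≤ n ^ d) (R : ℝ)
    (hR : 15 * (d : ℝ) ^ 3 * n * Real.log n ≤ R) :
    (((m + 1) ^ n * (m + 1) ^ n : ℕ) : ℝ) * Real.exp (-R) ≤ 1 / (n : ℝ) ^ (5 * d - 1) := by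
  have hn0 : (0 : ℝ) < n := by exact_mod_cast (by omega : 0 < n)
  have h1 : m + 1 ≤ n ^ (d + 1) := by
    have : 1 ≤ n ^ d := Nat.one_le_pow _ _ (by omega)
    rw [pow_succ]; nlinarith
  have h2 : (m + 1) ^ n * (m + 1) ^ n ≤ n ^ (2 * n * (d + 1)) := by
    calc _ ≤ (n ^ (d + 1)) ^ n * (n ^ (d + 1)) ^ n := by gcongr
      _ = _ := by rw [← pow_mul, ← pow_add]; congr 1; ring
  have h3 : Real.exp (-R) ≤ 1 / (n : ℝ) ^ (15 * d ^ 3 * n) := by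
    rw [Real.exp_neg, ← one_div]
    apply one_div_le_one_div_of_le (by positivity)
    calc (n : ℝ) ^ (15 * d ^ 3 * n) = Real.exp (15 * (d : ℝ) ^ 3 * n * Real.log n) := by
          rw [← Real.rpow_natCast, Real.rpow_def_of_pos hn0]; push_cast; ring_nf
      _ ≤ _ := Real.exp_le_exp.mpr hR
  have h4 : 2 * n * (d + 1) + (5 * d - 1) ≤ 15 * d ^ 3 * n := by
    have a1 : 4 * d ≤ d ^ 3 := by
      have : 4 ≤ d * d := by nlinarith
      calc 4 * d ≤ d * d * d := by gcongr
        _ = d ^ 3 := by ring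
    have a2 : 5 * d - 1 ≤ 5 * d * n := by
      have : 5 * d * 1 ≤ 5 * d * n := by gcongr; omega
      omega
    have a3 : 15 * (4 * d) * n ≤ 15 * d ^ 3 * n := by gcongr
    have a4 : 2 * n ≤ n * d := by nlinarith
    nlinarith
  have h5 : (((m + 1) ^ n * (m + 1) ^ n : ℕ) : ℝ) ≤ (n : ℝ) ^ (2 * n * (d + 1)) := by
    exact_mod_cast h2
  calc _ ≤ (n : ℝ) ^ (2 * n * (d + 1)) * (1 / (n : ℝ) ^ (15 * d ^ 3 * n)) :=
        mul_le_mul h5 h3 (Real.exp_pos _).le (by positivity)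
    _ ≤ _ := by
      rw [mul_one_div, div_le_div_iff₀ (by positivity) (by positivity), one_mul, ← pow_add]
      exact pow_le_pow_right₀ (by exact_mod_cast (by omega : 1 ≤ n)) h4

end HedcsAux

/-- HEDCS in edge sampled subgraphs: there is an absolute constant `C > 0` such
that for a pair `(G₁, G₂)` of (arbitrarily correlated) edge sampled subgraphs of
`G` with probability `p`, and arbitrary HEDCS `H₁ = f₁(G₁)`, `H₂ = f₂(G₂)` with
parameters `(β, (1−λ)β)` where `β ≥ 15d(αd)²·λ⁻²·log n` for some `α > 2/(1−p)`,
with probability at least `1 − 4/n^{5d−1}` every vertex `v` satisfies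
`|d_{H₁}(v) − d_{H₂}(v)| ≤ C·n^{1/2}·λ^{1/2}·β`. The common probability space is
modelled by a finite sample space `Ω` with weights `w` summing to 1 and maps
`g₁, g₂ : Ω → Finset (Finset V)` whose marginals are Bernoulli-`p` product
measures on subsets of `E`. -/
theorem hedcs_in_edge_sampled_subgraphs :
    ∃ C : ℝ, 0 < C ∧
      ∀ (V : Type) [Fintype V] [DecidableEq V],
      ∀ d : ℕ, 2 ≤ d →
      ∀ E : Finset (Finset V), (∀ e ∈ E, e.card = d) →
      ∀ n : ℕ, n = Fintype.card V →
      ∀ p lam β α : ℝ, 0 < p → p < 1 → 0 < lam → lam < 1 →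
        2 / (1 - p) < α →
        15 * (d : ℝ) * (α * d) ^ 2 / lam ^ 2 * Real.log n ≤ β →
      ∀ (Ω : Type) [Fintype Ω],
      ∀ (w : Ω → ℝ) (g₁ g₂ : Ω → Finset (Finset V)),
        (∀ ω, 0 ≤ w ω) → (∑ ω, w ω) = 1 →
        (∀ S ∈ E.powerset,
          ∑ ω ∈ Finset.univ.filter (fun ω => g₁ ω = S), w ω
            = p ^ S.card * (1 - p) ^ (E.card - S.card)) →
        (∀ S ∈ E.powerset,
          ∑ ω ∈ Finset.univ.filter (fun ω => g₂ ω = S), w ω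
            = p ^ S.card * (1 - p) ^ (E.card - S.card)) →
      ∀ (f₁ f₂ : Finset (Finset V) → Finset (Finset V)),
        (∀ S ⊆ E, IsHEDCS S (f₁ S) β ((1 - lam) * β)) →
        (∀ S ⊆ E, IsHEDCS S (f₂ S) β ((1 - lam) * β)) →
        1 - 4 / (n : ℝ) ^ (5 * d - 1) ≤
          ∑ ω, Set.indicator
            {ω : Ω | ∀ v : V,
              |((deg (f₁ (g₁ ω)) v : ℝ)) - (deg (f₂ (g₂ ω)) v : ℝ)|
                ≤ C * Real.sqrt n * Real.sqrt lam * β} w ω := by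
  refine ⟨4, by norm_num, ?_⟩
  intro V _ _ d hd E hE n hn p lam β α hp hp1 hl hl1 hα hβ Ω _ w g₁ g₂ hw hw1 hg₁ hg₂ f₁ f₂ hf₁ hf₂
  rcases Nat.lt_or_ge n 2 with hn2 | hn2
  · interval_cases n
    · have : IsEmpty V := Fintype.card_eq_zero_iff.mp hn.symm
      have h0 : 5 * d - 1 ≠ 0 := by omega
      simp [h0, hw1]
    · refine le_trans ?_ (Finset.sum_nonneg fun ω _ => Set.indicator_nonneg (fun ω _ => hw ω) ω)
      norm_num
  have hn0 : (0 : ℝ) < n := by exact_mod_cast (by omega : 0 < n)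
  have hlog : 0 < Real.log n := Real.log_pos (by exact_mod_cast (by omega : 1 < n))
  have hd0 : (0 : ℝ) < d := by exact_mod_cast (by omega : 0 < d)
  have hα2 : 2 < α := by
    refine lt_trans ?_ hα
    rw [lt_div_iff₀ (by linarith)]; linarith
  have hβ' : 60 * (d : ℝ) ^ 3 / lam ^ 2 * Real.log n ≤ β := by
    refine le_trans ?_ hβ
    have : (2 : ℝ) ^ 2 ≤ α ^ 2 := by gcongr
    have h3 : 0 < 15 * (d : ℝ) ^ 3 := by positivity
    have h4 : 60 * (d : ℝ) ^ 3 ≤ 15 * (d : ℝ) * (α * d) ^ 2 := by nlinarith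
    exact mul_le_mul_of_nonneg_right (div_le_div_of_nonneg_right h4 (by positivity)) hlog.le
  have hβ0 : 0 < β := lt_of_lt_of_le (by positivity) hβ'
  set R : ℝ := lam / (2 * β) * (lam * (Fintype.card V * β ^ 2) / 2) with hR
  have hRle : 15 * (d : ℝ) ^ 3 * n * Real.log n ≤ R := by
    have h1 : R = lam ^ 2 * β / 4 * n := by rw [hR, ← hn]; field_simp; ring
    have h2 : 60 * (d : ℝ) ^ 3 * Real.log n ≤ lam ^ 2 * β := by
      have := mul_le_mul_of_nonneg_left hβ' (by positivity : 0 ≤ lam ^ 2)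
      have h3 : lam ^ 2 * (60 * (d : ℝ) ^ 3 / lam ^ 2 * Real.log n)
        = 60 * (d : ℝ) ^ 3 * Real.log n := by field_simp
      linarith
    rw [h1]; nlinarith
  have hEc : E.card ≤ n ^ d := by
    have : E ⊆ Finset.powersetCard d Finset.univ := fun e he =>
      Finset.mem_powersetCard.mpr ⟨Finset.subset_univ _, hE e he⟩
    calc _ ≤ _ := Finset.card_le_card this
      _ = n.choose d := by rw [Finset.card_powersetCard, Finset.card_univ, hn]
      _ ≤ _ := Nat.choose_le_pow _ _
  set Q : Finset (V → ℕ) := Fintype.piFinset (fun _ => Finset.range (E.card + 1)) with hQ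
  have hPc : (Q ×ˢ Q).card = (E.card + 1) ^ n * (E.card + 1) ^ n := by
    rw [Finset.card_product, hQ, Fintype.card_piFinset]; simp [hn]
  have hdegQ : ∀ H ⊆ E, deg H ∈ Q := by
    intro H hH
    rw [hQ, Fintype.mem_piFinset]
    intro v
    rw [Finset.mem_range, Nat.lt_succ_iff]
    exact (Finset.card_filter_le _ _).trans (Finset.card_le_card hH)
  have x1 := HedcsAux.expect_pen E p hp hp1 w g₁ hw hw1 hg₁ lam β R hl hl1 hβ0 (Q ×ˢ Q)
  have x2 := HedcsAux.expect_pen E p hp hp1 w g₂ hw hw1 hg₂ lam β R hl hl1 hβ0 (Q ×ˢ Q)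
  have cnt := HedcsAux.count n d E.card hn2 hd hEc R hRle
  rw [← hPc] at cnt
  have key : ∀ ω, w ω * (1 - HedcsAux.pen E p lam β R (Q ×ˢ Q) (g₁ ω)
      - HedcsAux.pen E p lam β R (Q ×ˢ Q) (g₂ ω)) ≤ Set.indicator
            {ω : Ω | ∀ v : V,
              |((deg (f₁ (g₁ ω)) v : ℝ)) - (deg (f₂ (g₂ ω)) v : ℝ)|
                ≤ 4 * Real.sqrt n * Real.sqrt lam * β} w ω := by
    intro ω
    have n1 := HedcsAux.pen_nonneg E p lam β R (Q ×ˢ Q) (g₁ ω)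
    have n2 := HedcsAux.pen_nonneg E p lam β R (Q ×ˢ Q) (g₂ ω)
    have ind0 := Set.indicator_nonneg (s := {ω : Ω | ∀ v : V,
              |((deg (f₁ (g₁ ω)) v : ℝ)) - (deg (f₂ (g₂ ω)) v : ℝ)|
                ≤ 4 * Real.sqrt n * Real.sqrt lam * β}) (fun ω _ => hw ω) ω
    by_cases s1 : g₁ ω ⊆ E
    swap
    · rw [HedcsAux.supp E p w g₁ hw hw1 hg₁ ω s1, zero_mul]; exact ind0
    by_cases s2 : g₂ ω ⊆ E
    swap
    · rw [HedcsAux.supp E p w g₂ hw hw1 hg₂ ω s2, zero_mul]; exact ind0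
    by_cases p1 : HedcsAux.pen E p lam β R (Q ×ˢ Q) (g₁ ω) < 1
    swap
    · exact (mul_nonpos_of_nonneg_of_nonpos (hw ω) (by linarith)).trans ind0
    by_cases p2 : HedcsAux.pen E p lam β R (Q ×ˢ Q) (g₂ ω) < 1
    swap
    · exact (mul_nonpos_of_nonneg_of_nonpos (hw ω) (by linarith)).trans ind0
    have i1 := hf₁ _ s1
    have i2 := hf₂ _ s2
    have q1 := hdegQ _ (i1.1.trans s1)
    have q2 := hdegQ _ (i2.1.trans s2)
    have o1 := HedcsAux.of_pen E p lam β _ hl hβ0 _ _ p1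
    have o2 := HedcsAux.of_pen E p lam β _ hl hβ0 _ _ p2
    have m12 := Finset.mk_mem_product q1 q2
    have m21 := Finset.mk_mem_product q2 q1
    rw [Set.indicator_of_mem]
    · exact mul_le_of_le_one_right (hw ω) (by linarith)
    · intro v
      rw [hn]
      exact HedcsAux.determ d hd (g₁ ω) (g₂ ω) _ _ (fun e he => hE e (s1 he))
        (fun e he => hE e (s2 he)) lam β _ _ hl hl1 hβ0.le i1 i2 (o1 _ m12).1 (o2 _ m12).2
        (o2 _ m21).1 (o1 _ m21).2 v
  refine le_trans ?_ (Finset.sum_le_sum fun ω _ => key ω)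
  simp only [mul_sub, mul_one, Finset.sum_sub_distrib, hw1]
  have : 4 / (n : ℝ) ^ (5 * d - 1) = 4 * (1 / (n : ℝ) ^ (5 * d - 1)) := by ring
  rw [this]
  linarith
end

section
/- Let G = (V, E) be a d-uniform hypergraph with d ≥ 2 and let E = E₁ ∪ ⋯ ∪ E_k be a partition of the edge set into k ≥ 1 pairwise disjoint parts; write G_i = (V, E_i). Let 0 ≤ λ < 1, β > 0, δ ≥ 0, and for each i let C_i ⊆ E_i be an HEDCS(G_i, β, (1−λ)β). Suppose that for all i, j ∈ {1, …, k} and every vertex v ∈ V, |d_{C_i}(v) − d_{C_j}(v)| ≤ δ. Then C = C₁ ∪ ⋯ ∪ C_k is an HEDCS(G, k(β + dδ), k((1−λ)β − dδ)). -/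
open Finset

/-- Composition of HEDCS: if `E = E₁ ∪ ⋯ ∪ E_k` is a partition, each
`Cᵢ` is an `HEDCS(Gᵢ, β, (1−λ)β)`, and all the `Cᵢ` have pointwise degrees
within `δ` of each other, then `C = C₁ ∪ ⋯ ∪ C_k` is an
`HEDCS(G, k(β + dδ), k((1−λ)β − dδ))`. -/
theorem hedcs_composition {V : Type*} [DecidableEq V] (d : ℕ) (hd : 2 ≤ d)
    (k : ℕ) (hk : 1 ≤ k)
    (E : Finset (Finset V)) (hE : ∀ e ∈ E, e.card = d)
    (Ei : Fin k → Finset (Finset V))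
    (hdisj : ∀ i j, i ≠ j → Disjoint (Ei i) (Ei j))
    (hunion : Finset.univ.biUnion Ei = E)
    (lam β δ : ℝ) (hlam0 : 0 ≤ lam) (hlam1 : lam < 1) (hβ : 0 < β) (hδ : 0 ≤ δ)
    (Ci : Fin k → Finset (Finset V))
    (hC : ∀ i, IsHEDCS (Ei i) (Ci i) β ((1 - lam) * β))
    (hclose : ∀ i j, ∀ v : V, |((deg (Ci i) v : ℝ)) - (deg (Ci j) v : ℝ)| ≤ δ) :
    IsHEDCS E (Finset.univ.biUnion Ci)
      ((k : ℝ) * (β + d * δ)) ((k : ℝ) * ((1 - lam) * β - d * δ)) := by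
  have hdeg : ∀ v : V, (deg (Finset.univ.biUnion Ci) v : ℝ) = ∑ i, (deg (Ci i) v : ℝ) := by
    intro v
    have h : deg (Finset.univ.biUnion Ci) v = ∑ i, deg (Ci i) v := by
      unfold deg
      rw [Finset.filter_biUnion, Finset.card_biUnion]
      intro i _ j _ hij
      exact Disjoint.mono ((Finset.filter_subset _ _).trans (hC i).1)
        ((Finset.filter_subset _ _).trans (hC j).1) (hdisj i j hij)
    rw [h]
    push_cast
    rfl
  have hsum : ∀ e : Finset V, ∑ v ∈ e, (deg (Finset.univ.biUnion Ci) v : ℝ)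
      = ∑ i, ∑ v ∈ e, (deg (Ci i) v : ℝ) := by
    intro e
    rw [Finset.sum_comm]
    exact Finset.sum_congr rfl fun v _ => hdeg v
  have hcmp : ∀ e ∈ E, ∀ i j, ∑ v ∈ e, (deg (Ci i) v : ℝ)
      ≤ ∑ v ∈ e, (deg (Ci j) v : ℝ) + d * δ := by
    intro e he i j
    have h : ∑ v ∈ e, (deg (Ci i) v : ℝ) ≤ ∑ v ∈ e, ((deg (Ci j) v : ℝ) + δ) :=
      Finset.sum_le_sum fun v _ => by
        have := (abs_le.mp (hclose i j v)).2
        linarith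
    rw [Finset.sum_add_distrib, Finset.sum_const, hE e he, nsmul_eq_mul] at h
    exact h
  have hsub : Finset.univ.biUnion Ci ⊆ E := by
    rw [← hunion]
    exact Finset.biUnion_mono fun i _ => (hC i).1
  refine ⟨hsub, ?_, ?_⟩
  · intro e he
    have heE := hsub he
    obtain ⟨j, -, hj⟩ := Finset.mem_biUnion.mp he
    have hb := (hC j).2.1 e hj
    rw [hsum]
    have h := Finset.sum_le_card_nsmul Finset.univ
      (fun i => ∑ v ∈ e, (deg (Ci i) v : ℝ)) (β + d * δ)
      (fun i _ => by have := hcmp e heE i j; linarith)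
    rwa [Finset.card_univ, Fintype.card_fin, nsmul_eq_mul] at h
  · intro e he hne
    have he' := he
    rw [← hunion] at he'
    obtain ⟨j, -, hj⟩ := Finset.mem_biUnion.mp he'
    have hb := (hC j).2.2 e hj
      (fun hc => hne (Finset.mem_biUnion.mpr ⟨j, Finset.mem_univ _, hc⟩))
    rw [hsum]
    have h := Finset.card_nsmul_le_sum Finset.univ
      (fun i => ∑ v ∈ e, (deg (Ci i) v : ℝ)) ((1 - lam) * β - d * δ)
      (fun i _ => by have := hcmp e he j i; linarith)
    rwa [Finset.card_univ, Fintype.card_fin, nsmul_eq_mul] at h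
end
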